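/- arXiv:1203.3256 — 4 statements merged into one kernel-verified Lean document; each statement's English description precedes it below -/
import Mathlib

section
/- Let I be an instance of (1-in-3)-SAT with variables X_1,...,X_n and m clauses, each clause consisting of three literals on three distinct variables, and let (G_I, C_I) be the multigraph with exact conflict pairs constructed from I as described in the context. Then I admits a truth assignment under which every clause contains exactly one true literal if and only if G_I has an even orientation that violates no exact conflict pair of C_I. -/
open scoped Classical

noncomputable section

/-- The indegree of vertex `v` under the head-assignment `o`. -/
def indeg {V E : Type*} (o : E → V) (v : V) : ℕ := Nat.card {e // o e = v}

/-- `o` is an orientation of the multigraph with incidence map `ends`: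
every edge is directed towards one of its two endpoints (its head). -/
def IsOrient {V E : Type*} (ends : E → V × V) (o : E → V) : Prop :=
  ∀ e, o e = (ends e).1 ∨ o e = (ends e).2

/-- Edge `e` is incident to vertex `v`. -/
def Inc {V E : Type*} (ends : E → V × V) (e : E) (v : V) : Prop :=
  (ends e).1 = v ∨ (ends e).2 = v

section Construction

variable (n m : ℕ)

/-- Number of pendant legs at chain vertex `x_{i,l}`: three at the two ends of the
caterpillar chain, two at interior chain vertices. -/
def legCount (l : Fin (2 * m)) : ℕ := if l.val = 0 ∨ l.val = 2 * m - 1 then 3 else 2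

/-- The edges of `G_I` other than the possible parity edge `v₀v₀'`:
chain edges of the caterpillars, legs, and the pendant edges `a_jc_j`, `b_jc_j`. -/
def EB0 : Type :=
  {q : Fin n × Fin (2 * m) // q.2.val + 1 < 2 * m} ⊕
  {q : (Fin n × Fin (2 * m)) × Fin 3 // q.2.val < legCount m q.1.2} ⊕
  Fin m ⊕ Fin m

/-- The total number of edges so far is odd, so the vertex `v₀'` and the edge `v₀v₀'`
are added. -/
def cond0 : Prop := Odd (Nat.card (EB0 n m))

/-- The edges of `G_I`. -/
def E0T : Type := EB0 n m ⊕ PLift (cond0 n m)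

/-- The vertices of `G_I`: the chain vertices `x_{i,l}`, the clause vertices `c_j`,
the pendant vertices `a_j` and `b_j`, the vertex `v₀`, and possibly `v₀'`. -/
def V0T : Type :=
  (Fin n × Fin (2 * m)) ⊕ Fin m ⊕ Fin m ⊕ Fin m ⊕ Unit ⊕ PLift (cond0 n m)

variable (clauses : Fin m → Fin 3 → Fin n × Bool)

/-- The free endpoint of the leg `(i, l, r)`: the first leg (`r = 0`) of `x_{i,l}` is
attached to the clause vertex `c_j` (`j = ⌊l/2⌋`) when clause `j` uses variable `i`
positively (if `l` is even, i.e. `l = 2j-1` in 1-indexing) or negatively (if `l` is odd);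
all remaining legs are attached to `v₀`. -/
def legTarget (i : Fin n) (l : Fin (2 * m)) (r : Fin 3) : V0T n m :=
  if r.val = 0 ∧ ∃ t : Fin 3,
      clauses ⟨l.val / 2, by have := l.isLt; omega⟩ t = (i, decide (l.val % 2 = 0)) then
    Sum.inr (Sum.inl ⟨l.val / 2, by have := l.isLt; omega⟩)
  else Sum.inr (Sum.inr (Sum.inr (Sum.inr (Sum.inl ()))))

/-- The incidence map of `G_I`. -/
def ends0 : E0T n m → V0T n m × V0T n m
  | Sum.inl (Sum.inl q) =>
      (Sum.inl q.1, Sum.inl (q.1.1, ⟨q.1.2.val + 1, q.2⟩))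
  | Sum.inl (Sum.inr (Sum.inl q)) =>
      (Sum.inl q.1.1, legTarget n m clauses q.1.1.1 q.1.1.2 q.1.2)
  | Sum.inl (Sum.inr (Sum.inr (Sum.inl j))) =>
      (Sum.inr (Sum.inr (Sum.inl j)), Sum.inr (Sum.inl j))
  | Sum.inl (Sum.inr (Sum.inr (Sum.inr j))) =>
      (Sum.inr (Sum.inr (Sum.inr (Sum.inl j))), Sum.inr (Sum.inl j))
  | Sum.inr h =>
      (Sum.inr (Sum.inr (Sum.inr (Sum.inr (Sum.inl ())))),
        Sum.inr (Sum.inr (Sum.inr (Sum.inr (Sum.inr h)))))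

/-- The family `C_I` of exact conflict pairs of `G_I`: at every chain vertex every pair of
incident edges, and at every clause vertex `c_j` the pair `{a_jc_j, b_jc_j}`. -/
def C0 : Set (Set (E0T n m) × V0T n m) :=
  {c |
    (∃ (q : Fin n × Fin (2 * m)) (e₁ e₂ : E0T n m), e₁ ≠ e₂ ∧
      Inc (ends0 n m clauses) e₁ (Sum.inl q) ∧ Inc (ends0 n m clauses) e₂ (Sum.inl q) ∧
      c = (({e₁, e₂} : Set (E0T n m)), Sum.inl q)) ∨
    (∃ j : Fin m,
      c = (({Sum.inl (Sum.inr (Sum.inr (Sum.inl j))),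
             Sum.inl (Sum.inr (Sum.inr (Sum.inr j)))} : Set (E0T n m)),
           Sum.inr (Sum.inl j)))}

end Construction

section Incidence

variable {n m : ℕ}

instance : Finite (EB0 n m) := by unfold EB0; infer_instance

instance : Finite (E0T n m) := by unfold E0T; infer_instance

instance : Finite (V0T n m) := by unfold V0T; infer_instance

/-- The chain vertex `x_{i,l}`. -/
def chainVertex (q : Fin n × Fin (2 * m)) : V0T n m := Sum.inl q

/-- The clause vertex `c_j`. -/
def clauseVertex (j : Fin m) : V0T n m := Sum.inr (Sum.inl j)

/-- The vertex `v₀`. -/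
def baseVertex : V0T n m := Sum.inr (Sum.inr (Sum.inr (Sum.inr (Sum.inl ()))))

/-- The chain edge joining `x_{i,l}` to its successor. -/
def chainEdge (q : Fin n × Fin (2 * m)) (h : q.2.val + 1 < 2 * m) : E0T n m :=
  Sum.inl (Sum.inl ⟨q, h⟩)

/-- The leg of index `r` at `x_{i,l}`. -/
def legEdge (q : Fin n × Fin (2 * m)) (r : Fin 3) (h : r.val < legCount m q.2) : E0T n m :=
  Sum.inl (Sum.inr (Sum.inl ⟨(q, r), h⟩))

/-- The pendant edge `a_jc_j`. -/
def edgeA (j : Fin m) : E0T n m := Sum.inl (Sum.inr (Sum.inr (Sum.inl j)))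

/-- The pendant edge `b_jc_j`. -/
def edgeB (j : Fin m) : E0T n m := Sum.inl (Sum.inr (Sum.inr (Sum.inr j)))

/-- The edge `v₀v₀'`. -/
def parityEdge (h : PLift (cond0 n m)) : E0T n m := Sum.inr h

theorem edge_cases {P : E0T n m → Prop} (hchain : ∀ q h, P (chainEdge q h))
    (hleg : ∀ q r h, P (legEdge q r h)) (ha : ∀ j, P (edgeA j)) (hb : ∀ j, P (edgeB j))
    (hparity : ∀ h, P (parityEdge h)) (e : E0T n m) : P e := by
  rcases e with (⟨q, h⟩ | ⟨⟨q, r⟩, h⟩ | j | j) | h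
  exacts [hchain q h, hleg q r h, ha j, hb j, hparity h]

@[simp] theorem chainEdge_inj {q q' : Fin n × Fin (2 * m)} {h h'} :
    chainEdge q h = chainEdge q' h' ↔ q = q' :=
  ⟨fun e => congrArg Subtype.val (Sum.inl.inj (Sum.inl.inj e)), fun e => by subst e; rfl⟩

@[simp] theorem legEdge_inj {q q' : Fin n × Fin (2 * m)} {r r' : Fin 3} {h h'} :
    legEdge q r h = legEdge q' r' h' ↔ q = q' ∧ r = r' :=
  ⟨fun e => Prod.mk.inj (congrArg Subtype.val (Sum.inl.inj (Sum.inr.inj (Sum.inl.inj e)))),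
    fun ⟨e, e'⟩ => by subst e e'; rfl⟩

@[simp] theorem edgeA_inj {j j' : Fin m} : (edgeA j : E0T n m) = edgeA j' ↔ j = j' :=
  ⟨fun e => Sum.inl.inj (Sum.inr.inj (Sum.inr.inj (Sum.inl.inj e))), congrArg _⟩

@[simp] theorem edgeB_inj {j j' : Fin m} : (edgeB j : E0T n m) = edgeB j' ↔ j = j' :=
  ⟨fun e => Sum.inr.inj (Sum.inr.inj (Sum.inr.inj (Sum.inl.inj e))), congrArg _⟩

@[simp] theorem chainVertex_inj {q q' : Fin n × Fin (2 * m)} :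
    chainVertex q = chainVertex q' ↔ q = q' :=
  ⟨Sum.inl.inj, congrArg _⟩

@[simp] theorem clauseVertex_inj {j j' : Fin m} :
    (clauseVertex j : V0T n m) = clauseVertex j' ↔ j = j' :=
  ⟨fun e => Sum.inl.inj (Sum.inr.inj e), congrArg _⟩

@[simp] theorem chainEdge_ne_legEdge {q q' : Fin n × Fin (2 * m)} {h r h'} :
    chainEdge q h ≠ legEdge q' r h' := nofun

@[simp] theorem legEdge_ne_chainEdge {q q' : Fin n × Fin (2 * m)} {h r h'} :
    legEdge q' r h' ≠ chainEdge q h := nofun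

@[simp] theorem chainEdge_ne_edgeA {q : Fin n × Fin (2 * m)} {h j} :
    chainEdge q h ≠ edgeA j := nofun

@[simp] theorem chainEdge_ne_edgeB {q : Fin n × Fin (2 * m)} {h j} :
    chainEdge q h ≠ edgeB j := nofun

@[simp] theorem edgeA_ne_chainEdge {q : Fin n × Fin (2 * m)} {h j} :
    edgeA j ≠ chainEdge q h := nofun

@[simp] theorem edgeB_ne_chainEdge {q : Fin n × Fin (2 * m)} {h j} :
    edgeB j ≠ chainEdge q h := nofun

@[simp] theorem legEdge_ne_edgeA {q : Fin n × Fin (2 * m)} {r h j} :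
    legEdge q r h ≠ edgeA j := nofun

@[simp] theorem legEdge_ne_edgeB {q : Fin n × Fin (2 * m)} {r h j} :
    legEdge q r h ≠ edgeB j := nofun

@[simp] theorem edgeA_ne_legEdge {q : Fin n × Fin (2 * m)} {r h j} :
    edgeA j ≠ legEdge q r h := nofun

@[simp] theorem edgeB_ne_legEdge {q : Fin n × Fin (2 * m)} {r h j} :
    edgeB j ≠ legEdge q r h := nofun

@[simp] theorem edgeA_ne_edgeB {j j' : Fin m} : (edgeA j : E0T n m) ≠ edgeB j' := nofun

@[simp] theorem edgeB_ne_edgeA {j j' : Fin m} : (edgeB j : E0T n m) ≠ edgeA j' := nofun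

@[simp] theorem parityEdge_ne_chainEdge {q : Fin n × Fin (2 * m)} {h h'} :
    parityEdge h' ≠ chainEdge q h := nofun

@[simp] theorem parityEdge_ne_legEdge {q : Fin n × Fin (2 * m)} {r h h'} :
    parityEdge h' ≠ legEdge q r h := nofun

@[simp] theorem parityEdge_ne_edgeA {h : PLift (cond0 n m)} {j} :
    parityEdge h ≠ edgeA j := nofun

@[simp] theorem parityEdge_ne_edgeB {h : PLift (cond0 n m)} {j} :
    parityEdge h ≠ edgeB j := nofun

@[simp] theorem chainVertex_ne_clauseVertex {q : Fin n × Fin (2 * m)} {j} :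
    chainVertex q ≠ clauseVertex j := nofun

@[simp] theorem clauseVertex_ne_chainVertex {q : Fin n × Fin (2 * m)} {j} :
    clauseVertex j ≠ chainVertex q := nofun

@[simp] theorem baseVertex_ne_chainVertex {q : Fin n × Fin (2 * m)} :
    baseVertex ≠ chainVertex q := nofun

@[simp] theorem baseVertex_ne_clauseVertex {j : Fin m} :
    (baseVertex : V0T n m) ≠ clauseVertex j := nofun

variable (clauses : Fin m → Fin 3 → Fin n × Bool)

theorem legTarget_cases (i : Fin n) (l : Fin (2 * m)) (r : Fin 3) :
    (∃ j : Fin m, legTarget n m clauses i l r = clauseVertex j ∧ r = 0 ∧ l.val / 2 = j.val ∧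
      ∃ t, clauses j t = (i, decide (l.val % 2 = 0))) ∨
    (legTarget n m clauses i l r = baseVertex ∧ ∀ j : Fin m, r = 0 → l.val / 2 = j.val →
      ¬ ∃ t, clauses j t = (i, decide (l.val % 2 = 0))) := by
  by_cases h : r.val = 0 ∧ ∃ t : Fin 3,
      clauses ⟨l.val / 2, by have := l.isLt; omega⟩ t = (i, decide (l.val % 2 = 0))
  · exact Or.inl ⟨_, if_pos h, Fin.ext h.1, rfl, h.2⟩
  · refine Or.inr ⟨if_neg h, ?_⟩
    rintro ⟨j, hj⟩ rfl rfl ht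
    exact h ⟨rfl, ht⟩

theorem legTarget_ne_chainVertex (i : Fin n) (l : Fin (2 * m)) (r : Fin 3)
    (q : Fin n × Fin (2 * m)) : legTarget n m clauses i l r ≠ chainVertex q := by
  rcases legTarget_cases clauses i l r with ⟨j, h, -⟩ | ⟨h, -⟩ <;> simp [h]

theorem legTarget_eq_clauseVertex_or_baseVertex (i : Fin n) (l : Fin (2 * m)) (r : Fin 3) :
    (∃ j, legTarget n m clauses i l r = clauseVertex j) ∨
      legTarget n m clauses i l r = baseVertex :=
  (legTarget_cases clauses i l r).imp (fun ⟨j, h, _⟩ => ⟨j, h⟩) And.left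

theorem legTarget_eq_clauseVertex_iff {i : Fin n} {l : Fin (2 * m)} {r : Fin 3} {j : Fin m} :
    legTarget n m clauses i l r = clauseVertex j ↔
      r = 0 ∧ l.val / 2 = j.val ∧ ∃ t, clauses j t = (i, decide (l.val % 2 = 0)) := by
  rcases legTarget_cases clauses i l r with ⟨j', h, hr, hl, ht⟩ | ⟨h, hnone⟩
  · rw [h, clauseVertex_inj]
    refine ⟨?_, fun h => Fin.ext (hl.symm.trans h.2.1)⟩
    rintro rfl
    exact ⟨hr, hl, ht⟩
  · rw [h]
    exact ⟨fun h' => (baseVertex_ne_clauseVertex h').elim,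
      fun ⟨hr, hl, ht⟩ => (hnone j hr hl ht).elim⟩

theorem two_le_legCount (l : Fin (2 * m)) : 2 ≤ legCount m l := by
  unfold legCount
  split_ifs <;> omega

/-- The chain position `l` at which a literal of clause `j` with sign `b` is attached. -/
def literalPos (j : Fin m) (b : Bool) : Fin (2 * m) :=
  ⟨2 * j.val + if b then 0 else 1, by have := j.isLt; split_ifs <;> omega⟩

theorem literalPos_div (j : Fin m) (b : Bool) : (literalPos j b).val / 2 = j.val := by
  cases b <;> simp [literalPos]
  omega

theorem literalPos_mod (j : Fin m) (b : Bool) :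
    decide ((literalPos j b).val % 2 = 0) = b := by
  cases b <;> simp [literalPos]

theorem literalPos_eq (j : Fin m) (l : Fin (2 * m)) (h : l.val / 2 = j.val) :
    literalPos j (decide (l.val % 2 = 0)) = l := by
  ext
  simp only [literalPos, decide_eq_true_eq]
  split_ifs <;> omega

/-- The chain vertex carrying the literal `t` of clause `j`. -/
def literalAt (j : Fin m) (t : Fin 3) : Fin n × Fin (2 * m) :=
  ((clauses j t).1, literalPos j (clauses j t).2)

/-- The leg joining `c_j` to the chain vertex carrying its literal `t`. -/
def literalLeg (j : Fin m) (t : Fin 3) : E0T n m :=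
  legEdge (literalAt clauses j t) 0 (by have := two_le_legCount (literalAt clauses j t).2; omega)

theorem legTarget_literalAt (j : Fin m) (t : Fin 3) :
    legTarget n m clauses (literalAt clauses j t).1 (literalAt clauses j t).2 0 =
      clauseVertex j := by
  rw [legTarget_eq_clauseVertex_iff]
  exact ⟨rfl, literalPos_div _ _, t, Prod.ext rfl (literalPos_mod _ _).symm⟩

theorem inc_chainEdge {q : Fin n × Fin (2 * m)} {h} {v : V0T n m} :
    Inc (ends0 n m clauses) (chainEdge q h) v ↔
      chainVertex q = v ∨ chainVertex (q.1, ⟨q.2.val + 1, h⟩) = v := Iff.rfl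

theorem inc_legEdge {q : Fin n × Fin (2 * m)} {r h} {v : V0T n m} :
    Inc (ends0 n m clauses) (legEdge q r h) v ↔
      chainVertex q = v ∨ legTarget n m clauses q.1 q.2 r = v := Iff.rfl

theorem inc_clauseVertex_iff (j : Fin m) (e : E0T n m) :
    Inc (ends0 n m clauses) e (clauseVertex j) ↔
      e = edgeA j ∨ e = edgeB j ∨ ∃ t, literalLeg clauses j t = e := by
  induction e using edge_cases with
  | hchain q h => simp [inc_chainEdge, literalLeg]
  | hleg q r h =>
    simp only [inc_legEdge, chainVertex_ne_clauseVertex, false_or, legEdge_ne_edgeA,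
      legEdge_ne_edgeB, legTarget_eq_clauseVertex_iff, literalLeg, legEdge_inj]
    constructor
    · rintro ⟨rfl, hl, t, ht⟩
      refine ⟨t, ?_, rfl⟩
      simp only [literalAt, ht, literalPos_eq j q.2 hl]
    · rintro ⟨t, rfl, rfl⟩
      exact ⟨rfl, literalPos_div _ _, t, Prod.ext rfl (literalPos_mod _ _).symm⟩
  | ha j' =>
    simp only [edgeA_inj, edgeA_ne_edgeB, literalLeg, legEdge_ne_edgeA, exists_false, or_false]
    exact ⟨fun h => h.elim nofun clauseVertex_inj.1, fun h => Or.inr (h ▸ rfl)⟩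
  | hb j' =>
    simp only [edgeB_inj, edgeB_ne_edgeA, literalLeg, legEdge_ne_edgeB, exists_false, or_false,
      false_or]
    exact ⟨fun h => h.elim nofun clauseVertex_inj.1, fun h => Or.inr (h ▸ rfl)⟩
  | hparity h =>
    simp only [parityEdge_ne_edgeA, parityEdge_ne_edgeB, false_or]
    exact ⟨fun h => h.elim nofun nofun, fun ⟨t, ht⟩ => nomatch ht⟩

theorem literalLeg_injective (j : Fin m)
    (hj : Function.Injective fun t => (clauses j t).1) :
    Function.Injective (literalLeg clauses j) := fun t t' h =>
  hj (show (literalAt clauses j t).1 = (literalAt clauses j t').1 from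
    congrArg Prod.fst (legEdge_inj.1 h).1)

theorem not_inc_chainVertex_of_pendant (q : Fin n × Fin (2 * m)) :
    (∀ j, ¬ Inc (ends0 n m clauses) (edgeA j) (chainVertex q)) ∧
    (∀ j, ¬ Inc (ends0 n m clauses) (edgeB j) (chainVertex q)) ∧
    ∀ h, ¬ Inc (ends0 n m clauses) (parityEdge h) (chainVertex q) :=
  ⟨fun _ h => h.elim nofun nofun, fun _ h => h.elim nofun nofun, fun _ h => h.elim nofun nofun⟩

theorem ncard_four {α : Type*} {a b c d : α} (hab : a ≠ b) (hac : a ≠ c) (had : a ≠ d)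
    (hbc : b ≠ c) (hbd : b ≠ d) (hcd : c ≠ d) : ({a, b, c, d} : Set α).ncard = 4 := by
  rw [Set.ncard_insert_of_notMem (by simp [hab, hac, had]),
    Set.ncard_insert_of_notMem (by simp [hbc, hbd]), Set.ncard_pair hcd]

/-- Every chain vertex has degree four. -/
theorem ncard_inc_chainVertex (q : Fin n × Fin (2 * m)) :
    {e | Inc (ends0 n m clauses) e (chainVertex q)}.ncard = 4 := by
  obtain ⟨i, l, hl⟩ := q
  obtain ⟨hA, hB, hP⟩ := not_inc_chainVertex_of_pendant clauses (i, ⟨l, hl⟩)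
  by_cases h0 : l = 0
  · have hc : legCount m ⟨l, hl⟩ = 3 := by simp [legCount, h0]
    have hs : {e | Inc (ends0 n m clauses) e (chainVertex (i, ⟨l, hl⟩))} =
        {chainEdge (i, ⟨l, hl⟩) (by simp; omega), legEdge (i, ⟨l, hl⟩) 0 (by simp [hc]),
          legEdge (i, ⟨l, hl⟩) 1 (by simp [hc]), legEdge (i, ⟨l, hl⟩) 2 (by simp [hc])} := by
      ext e
      induction e using edge_cases with
      | hchain q h =>
        obtain ⟨i', l', hl'⟩ := q
        simp [inc_chainEdge]
        omega
      | hleg q r h =>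
        simp [inc_legEdge, legTarget_ne_chainVertex]
        fin_cases r <;> simp
      | ha j => simp [hA]
      | hb j => simp [hB]
      | hparity h => simp [hP]
    rw [hs]
    apply ncard_four <;> simp
  · by_cases h1 : l = 2 * m - 1
    · have hc : legCount m ⟨l, hl⟩ = 3 := by simp [legCount, h1]
      have hs : {e | Inc (ends0 n m clauses) e (chainVertex (i, ⟨l, hl⟩))} =
          {chainEdge (i, ⟨l - 1, by omega⟩) (by simp; omega),
            legEdge (i, ⟨l, hl⟩) 0 (by simp [hc]), legEdge (i, ⟨l, hl⟩) 1 (by simp [hc]),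
            legEdge (i, ⟨l, hl⟩) 2 (by simp [hc])} := by
        ext e
        induction e using edge_cases with
        | hchain q h =>
          obtain ⟨i', l', hl'⟩ := q
          simp [inc_chainEdge] at h ⊢
          omega
        | hleg q r h =>
          simp [inc_legEdge, legTarget_ne_chainVertex]
          fin_cases r <;> simp
        | ha j => simp [hA]
        | hb j => simp [hB]
        | hparity h => simp [hP]
      rw [hs]
      apply ncard_four <;> simp
    · have hc : legCount m ⟨l, hl⟩ = 2 := by simp [legCount, h0, h1]
      have hs : {e | Inc (ends0 n m clauses) e (chainVertex (i, ⟨l, hl⟩))} =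
          {chainEdge (i, ⟨l - 1, by omega⟩) (by simp; omega),
            chainEdge (i, ⟨l, hl⟩) (by simp; omega),
            legEdge (i, ⟨l, hl⟩) 0 (by simp [hc]), legEdge (i, ⟨l, hl⟩) 1 (by simp [hc])} := by
        ext e
        induction e using edge_cases with
        | hchain q h =>
          obtain ⟨i', l', hl'⟩ := q
          simp [inc_chainEdge] at h ⊢
          omega
        | hleg q r h =>
          simp [inc_legEdge, legTarget_ne_chainVertex]
          fin_cases r <;> simp
          rintro rfl
          simp [hc] at h
        | ha j => simp [hA]
        | hb j => simp [hB]
        | hparity h => simp [hP]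
      rw [hs]
      apply ncard_four <;> simp
      omega

end Incidence

section Orientation

variable {n m : ℕ}

theorem indeg_eq_ncard {V E : Type*} (o : E → V) (v : V) : indeg o v = {e | o e = v}.ncard :=
  rfl

theorem IsOrient.inc {V E : Type*} {ends : E → V × V} {o : E → V} (ho : IsOrient ends o)
    {e : E} {v : V} (h : o e = v) : Inc ends e v :=
  (ho e).imp (fun h' => h'.symm.trans h) (fun h' => h'.symm.trans h)

theorem sum_indeg {V E : Type*} [Fintype V] [Finite E] (o : E → V) :
    ∑ v, indeg o v = Nat.card E := by
  have := Fintype.ofFinite E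
  simp only [indeg, Nat.card_eq_fintype_card, Fintype.card_subtype]
  exact (Finset.card_eq_sum_card_fiberwise fun _ _ => Finset.mem_coe.2 (Finset.mem_univ _)).symm

/-- If the number of edges is even, then one indegree is even once all the others are. -/
theorem even_indeg_of_forall_ne {V E : Type*} [Finite V] [Finite E] (o : E → V) (v : V)
    (hE : Even (Nat.card E)) (h : ∀ w, w ≠ v → Even (indeg o w)) : Even (indeg o v) := by
  have := Fintype.ofFinite V
  have hs := sum_indeg o
  rw [← Finset.add_sum_erase _ _ (Finset.mem_univ v)] at hs
  have he : Even (∑ w ∈ Finset.univ.erase v, indeg o w) :=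
    Finset.even_sum _ fun w hw => h w (Finset.ne_of_mem_erase hw)
  rw [← hs] at hE
  exact (Nat.even_add.1 hE).2 he

theorem even_card_E0T (n m : ℕ) : Even (Nat.card (E0T n m)) := by
  have hcard : Nat.card (E0T n m) = Nat.card (EB0 n m) + Nat.card (PLift (cond0 n m)) :=
    Nat.card_sum
  rw [hcard]
  by_cases h : cond0 n m
  · have : Nat.card (PLift (cond0 n m)) = 1 := by
      have : Unique (PLift (cond0 n m)) := ⟨⟨⟨h⟩⟩, fun _ => rfl⟩
      exact Nat.card_unique
    rw [this]
    exact h.add_one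
  · have : IsEmpty (PLift (cond0 n m)) := ⟨fun x => h x.down⟩
    rw [Nat.card_of_isEmpty (α := PLift (cond0 n m)), add_zero]
    exact Nat.not_odd_iff_even.1 h

/-- Of three propositions exactly one fails iff an even, nonzero number of them holds. -/
theorem existsUnique_not_iff (P : Fin 3 → Prop) :
    (∃! t, ¬ P t) ↔ Even {t | P t}.ncard ∧ ∃ t, P t := by
  have hcard : {t | P t}.ncard =
      (if P 0 then 1 else 0) + (if P 1 then 1 else 0) + if P 2 then 1 else 0 := by
    rw [Set.ncard_eq_toFinset_card', Set.toFinset_ofPred, Finset.card_filter, Fin.sum_univ_three]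
  rw [hcard, ExistsUnique]
  by_cases h₀ : P 0 <;> by_cases h₁ : P 1 <;> by_cases h₂ : P 2 <;>
    simp [Fin.exists_fin_succ, Fin.forall_fin_succ, h₀, h₁, h₂, Nat.even_iff]

variable (clauses : Fin m → Fin 3 → Fin n × Bool) {o : E0T n m → V0T n m}

/-- When both pendant edges point to `c_j`, its indegree is two more than the number of
literal legs pointing to it. -/
theorem indeg_clauseVertex (ho : IsOrient (ends0 n m clauses) o) {j : Fin m}
    (hj : Function.Injective fun t => (clauses j t).1) (ha : o (edgeA j) = clauseVertex j)
    (hb : o (edgeB j) = clauseVertex j) :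
    indeg o (clauseVertex j) = {t | o (literalLeg clauses j t) = clauseVertex j}.ncard + 2 := by
  have hs : {e | o e = clauseVertex j} = insert (edgeA j) (insert (edgeB j)
      (literalLeg clauses j '' {t | o (literalLeg clauses j t) = clauseVertex j})) := by
    ext e
    constructor
    · intro he
      rcases (inc_clauseVertex_iff clauses j e).1 (ho.inc he) with h | h | ⟨t, rfl⟩
      · exact Or.inl h
      · exact Or.inr (Or.inl h)
      · exact Or.inr (Or.inr ⟨t, he, rfl⟩)
    · rintro (rfl | rfl | ⟨t, ht, rfl⟩)
      exacts [ha, hb, ht]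
  rw [indeg_eq_ncard, hs, Set.ncard_insert_of_notMem (by simp [literalLeg]),
    Set.ncard_insert_of_notMem (by simp [literalLeg]),
    Set.ncard_image_of_injective _ (literalLeg_injective clauses j hj)]

/-- The clause vertex `c_j` has even indegree and does not violate its conflict iff exactly one
literal leg points away from it. -/
theorem clauseVertex_condition_iff (ho : IsOrient (ends0 n m clauses) o) {j : Fin m}
    (hj : Function.Injective fun t => (clauses j t).1) (ha : o (edgeA j) = clauseVertex j)
    (hb : o (edgeB j) = clauseVertex j) :
    (Even (indeg o (clauseVertex j)) ∧ {e | o e = clauseVertex j} ≠ {edgeA j, edgeB j}) ↔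
      ∃! t, ¬ o (literalLeg clauses j t) = clauseVertex j := by
  rw [existsUnique_not_iff, indeg_clauseVertex clauses ho hj ha hb]
  refine and_congr (by simp [Nat.even_add]) ?_
  rw [← not_iff_not, not_not, not_exists]
  constructor
  · intro h t ht
    have : literalLeg clauses j t ∈ ({edgeA j, edgeB j} : Set (E0T n m)) := h ▸ ht
    simp [literalLeg] at this
  · intro h
    ext e
    constructor
    · intro he
      rcases (inc_clauseVertex_iff clauses j e).1 (ho.inc he) with h' | h' | ⟨t, rfl⟩
      · exact Or.inl h'
      · exact Or.inr h'
      · exact (h t he).elim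
    · rintro (rfl | rfl)
      exacts [ha, hb]

/-- The chain vertex `q` has even indegree and violates no conflict iff it is a sink or a
source. -/
theorem chainVertex_condition_iff (ho : IsOrient (ends0 n m clauses) o)
    (q : Fin n × Fin (2 * m)) :
    (Even (indeg o (chainVertex q)) ∧
      ∀ e₁ e₂ : E0T n m, e₁ ≠ e₂ → Inc (ends0 n m clauses) e₁ (chainVertex q) →
        Inc (ends0 n m clauses) e₂ (chainVertex q) → {e | o e = chainVertex q} ≠ {e₁, e₂}) ↔
      (∀ e, Inc (ends0 n m clauses) e (chainVertex q) → o e = chainVertex q) ∨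
        ∀ e, o e ≠ chainVertex q := by
  have hsub : {e | o e = chainVertex q} ⊆ {e | Inc (ends0 n m clauses) e (chainVertex q)} :=
    fun e he => ho.inc he
  have h4 := ncard_inc_chainVertex clauses q
  rw [indeg_eq_ncard]
  constructor
  · rintro ⟨heven, hpair⟩
    have hle := Set.ncard_le_ncard hsub
    have hne : {e | o e = chainVertex q}.ncard ≠ 2 := by
      intro h
      obtain ⟨e₁, e₂, hne, hs⟩ := Set.ncard_eq_two.1 h
      have h₁ : e₁ ∈ {e | o e = chainVertex q} := hs ▸ Or.inl rfl
      have h₂ : e₂ ∈ {e | o e = chainVertex q} := hs ▸ Or.inr rfl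
      exact hpair e₁ e₂ hne (hsub h₁) (hsub h₂) hs
    obtain ⟨k, hk⟩ := heven
    have hcase : {e | o e = chainVertex q}.ncard = 4 ∨ {e | o e = chainVertex q}.ncard = 0 := by
      omega
    rcases hcase with h | h
    · left
      have := Set.eq_of_subset_of_ncard_le hsub (by omega)
      exact fun e he => this.symm.subset he
    · right
      rw [Set.ncard_eq_zero] at h
      exact fun e he => h.subset he
  · intro h
    have hcard : {e | o e = chainVertex q}.ncard = 4 ∨ {e | o e = chainVertex q}.ncard = 0 := by
      rcases h with h | h
      · exact Or.inl ((congrArg Set.ncard (hsub.antisymm h)).trans h4)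
      · exact Or.inr ((Set.ncard_eq_zero).2 (Set.eq_empty_of_forall_notMem h))
    refine ⟨by rcases hcard with h | h <;> rw [h] <;> decide, fun e₁ e₂ hne _ _ hs => ?_⟩
    rw [hs, Set.ncard_pair hne] at hcard
    omega

end Orientation

section Assignment

variable {n m : ℕ}

/-- The chain vertex `q` represents a literal made true by `A`. -/
def IsTrueAt (A : Fin n → Bool) (q : Fin n × Fin (2 * m)) : Prop :=
  A q.1 = decide (q.2.val % 2 = 0)

theorem isTrueAt_succ (A : Fin n → Bool) (q : Fin n × Fin (2 * m)) (h : q.2.val + 1 < 2 * m) :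
    IsTrueAt A (q.1, (⟨q.2.val + 1, h⟩ : Fin (2 * m))) ↔ ¬ IsTrueAt A q := by
  have : decide ((q.2.val + 1) % 2 = 0) = !decide (q.2.val % 2 = 0) := by
    rw [← decide_not, decide_eq_decide]
    omega
  simp only [IsTrueAt, this]
  cases A q.1 <;> cases decide (q.2.val % 2 = 0) <;> simp

variable (clauses : Fin m → Fin 3 → Fin n × Bool)

theorem isTrueAt_literalAt (A : Fin n → Bool) (j : Fin m) (t : Fin 3) :
    IsTrueAt A (literalAt clauses j t) ↔ A (clauses j t).1 = (clauses j t).2 := by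
  exact Eq.congr_right (literalPos_mod j (clauses j t).2)

/-- The orientation of `G_I` in which the chain vertices of true literals are sinks and the other
chain vertices are sources. -/
def assignmentOrient (A : Fin n → Bool) : E0T n m → V0T n m
  | Sum.inl (Sum.inl q) =>
      if IsTrueAt A q.1 then chainVertex q.1 else chainVertex (q.1.1, ⟨q.1.2.val + 1, q.2⟩)
  | Sum.inl (Sum.inr (Sum.inl q)) =>
      if IsTrueAt A q.1.1 then chainVertex q.1.1
      else legTarget n m clauses q.1.1.1 q.1.1.2 q.1.2
  | Sum.inl (Sum.inr (Sum.inr (Sum.inl j))) => clauseVertex j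
  | Sum.inl (Sum.inr (Sum.inr (Sum.inr j))) => clauseVertex j
  | Sum.inr _ => baseVertex

theorem assignmentOrient_chainEdge (A : Fin n → Bool) (q : Fin n × Fin (2 * m)) (h) :
    assignmentOrient clauses A (chainEdge q h) =
      if IsTrueAt A q then chainVertex q else chainVertex (q.1, ⟨q.2.val + 1, h⟩) := rfl

theorem assignmentOrient_legEdge (A : Fin n → Bool) (q : Fin n × Fin (2 * m)) (r h) :
    assignmentOrient clauses A (legEdge q r h) =
      if IsTrueAt A q then chainVertex q else legTarget n m clauses q.1 q.2 r := rfl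

theorem isOrient_assignmentOrient (A : Fin n → Bool) :
    IsOrient (ends0 n m clauses) (assignmentOrient clauses A) := by
  intro e
  induction e using edge_cases with
  | hchain q h =>
    rw [assignmentOrient_chainEdge]
    split_ifs
    exacts [Or.inl rfl, Or.inr rfl]
  | hleg q r h =>
    rw [assignmentOrient_legEdge]
    split_ifs
    exacts [Or.inl rfl, Or.inr rfl]
  | ha j => exact Or.inr rfl
  | hb j => exact Or.inr rfl
  | hparity h => exact Or.inl rfl

theorem assignmentOrient_eq_chainVertex_iff (A : Fin n → Bool) (q : Fin n × Fin (2 * m))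
    (e : E0T n m) : assignmentOrient clauses A e = chainVertex q ↔
      Inc (ends0 n m clauses) e (chainVertex q) ∧ IsTrueAt A q := by
  refine ⟨fun h => ⟨(isOrient_assignmentOrient clauses A).inc h, ?_⟩, ?_⟩
  · induction e using edge_cases with
    | hchain q' h' =>
      rw [assignmentOrient_chainEdge] at h
      split_ifs at h with hq <;> rw [chainVertex_inj] at h <;> subst h
      · exact hq
      · exact (isTrueAt_succ A q' h').2 hq
    | hleg q' r h' =>
      rw [assignmentOrient_legEdge] at h
      split_ifs at h with hq
      · rwa [← chainVertex_inj.1 h]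
      · exact (legTarget_ne_chainVertex clauses _ _ _ _ h).elim
    | ha j => exact (clauseVertex_ne_chainVertex h).elim
    | hb j => exact (clauseVertex_ne_chainVertex h).elim
    | hparity h' => exact (baseVertex_ne_chainVertex h).elim
  · rintro ⟨hinc, hq⟩
    induction e using edge_cases with
    | hchain q' h' =>
      rw [inc_chainEdge, chainVertex_inj, chainVertex_inj] at hinc
      rw [assignmentOrient_chainEdge]
      rcases hinc with rfl | rfl
      · rw [if_pos hq]
      · rw [if_neg ((isTrueAt_succ A q' h').1 hq)]
    | hleg q' r h' =>
      rw [inc_legEdge, chainVertex_inj] at hinc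
      rcases hinc with rfl | h
      · rw [assignmentOrient_legEdge, if_pos hq]
      · exact (legTarget_ne_chainVertex clauses _ _ _ _ h).elim
    | ha j => exact ((not_inc_chainVertex_of_pendant clauses q).1 j hinc).elim
    | hb j => exact ((not_inc_chainVertex_of_pendant clauses q).2.1 j hinc).elim
    | hparity h => exact ((not_inc_chainVertex_of_pendant clauses q).2.2 h hinc).elim

theorem assignmentOrient_literalLeg_eq_clauseVertex_iff (A : Fin n → Bool) (j : Fin m)
    (t : Fin 3) : assignmentOrient clauses A (literalLeg clauses j t) = clauseVertex j ↔
      ¬ A (clauses j t).1 = (clauses j t).2 := by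
  rw [literalLeg, assignmentOrient_legEdge, legTarget_literalAt, ← isTrueAt_literalAt]
  split_ifs with h <;> simp [h]

/-- The heads chosen by `assignmentOrient` are chain vertices, clause vertices or `v₀`. -/
theorem assignmentOrient_range (A : Fin n → Bool) (e : E0T n m) :
    (∃ q, assignmentOrient clauses A e = chainVertex q) ∨
      (∃ j, assignmentOrient clauses A e = clauseVertex j) ∨
      assignmentOrient clauses A e = baseVertex := by
  induction e using edge_cases with
  | hchain q h =>
    rw [assignmentOrient_chainEdge]
    split_ifs
    exacts [Or.inl ⟨_, rfl⟩, Or.inl ⟨_, rfl⟩]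
  | hleg q r h =>
    rw [assignmentOrient_legEdge]
    split_ifs
    exacts [Or.inl ⟨_, rfl⟩, Or.inr (legTarget_eq_clauseVertex_or_baseVertex clauses _ _ _)]
  | ha j => exact Or.inr (Or.inl ⟨_, rfl⟩)
  | hb j => exact Or.inr (Or.inl ⟨_, rfl⟩)
  | hparity h => exact Or.inr (Or.inr rfl)

theorem even_indeg_assignmentOrient_of_ne (A : Fin n → Bool) {v : V0T n m}
    (hchain : ∀ q, chainVertex q ≠ v) (hclause : ∀ j, clauseVertex j ≠ v)
    (hbase : baseVertex ≠ v) : Even (indeg (assignmentOrient clauses A) v) := by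
  suffices h : {e | assignmentOrient clauses A e = v} = ∅ by
    rw [indeg_eq_ncard, h, Set.ncard_empty]
    exact Even.zero
  refine Set.eq_empty_of_forall_notMem fun e he => ?_
  rcases assignmentOrient_range clauses A e with ⟨q, h⟩ | ⟨j, h⟩ | h
  exacts [hchain q (h.symm.trans he), hclause j (h.symm.trans he), hbase (h.symm.trans he)]

theorem exists_orient_of_assignment (hdistinct : ∀ j, Function.Injective fun t => (clauses j t).1)
    (A : Fin n → Bool) (hA : ∀ j, ∃! t : Fin 3, A (clauses j t).1 = (clauses j t).2) :
    IsOrient (ends0 n m clauses) (assignmentOrient clauses A) ∧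
      (∀ x, Even (indeg (assignmentOrient clauses A) x)) ∧
      ∀ c ∈ C0 n m clauses, {e | assignmentOrient clauses A e = c.2} ≠ c.1 := by
  have ho := isOrient_assignmentOrient clauses A
  have hchain := fun q => (chainVertex_condition_iff clauses ho q).2 <| by
    by_cases hq : IsTrueAt A q
    · exact Or.inl fun e he => (assignmentOrient_eq_chainVertex_iff clauses A q e).2 ⟨he, hq⟩
    · exact Or.inr fun e he => hq ((assignmentOrient_eq_chainVertex_iff clauses A q e).1 he).2
  have hclause := fun j => (clauseVertex_condition_iff clauses ho (hdistinct j) rfl rfl).2 <| by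
    simpa only [assignmentOrient_literalLeg_eq_clauseVertex_iff, not_not] using hA j
  refine ⟨ho, ?_, ?_⟩
  · have hne : ∀ x, x ≠ baseVertex → Even (indeg (assignmentOrient clauses A) x) := by
      rintro (q | j | j | j | ⟨⟩ | h) hx
      · exact (hchain q).1
      · exact (hclause j).1
      · exact even_indeg_assignmentOrient_of_ne clauses A (fun _ => nofun) (fun _ => nofun) nofun
      · exact even_indeg_assignmentOrient_of_ne clauses A (fun _ => nofun) (fun _ => nofun) nofun
      · exact (hx rfl).elim
      · exact even_indeg_assignmentOrient_of_ne clauses A (fun _ => nofun) (fun _ => nofun) nofun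
    intro x
    by_cases hx : x = baseVertex
    · rw [hx]
      exact even_indeg_of_forall_ne _ _ (even_card_E0T n m) hne
    · exact hne x hx
  · rintro c (⟨q, e₁, e₂, hne, h₁, h₂, rfl⟩ | ⟨j, rfl⟩)
    · exact (hchain q).2 e₁ e₂ hne h₁ h₂
    · exact (hclause j).2

/-- A pendant vertex is never the head of its only edge in an even orientation. -/
theorem head_ne_of_unique_inc {V E : Type*} {ends : E → V × V} {o : E → V}
    (ho : IsOrient ends o) {e : E} {v : V} (heven : Even (indeg o v))
    (huniq : ∀ e', Inc ends e' v → e' = e) : o e ≠ v := by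
  intro he
  have : {e' | o e' = v} = {e} :=
    Set.Subset.antisymm (fun e' h => huniq e' (ho.inc h)) (Set.singleton_subset_iff.2 he)
  rw [indeg_eq_ncard, this, Set.ncard_singleton] at heven
  exact absurd heven (by decide)

theorem edgeA_head {o : E0T n m → V0T n m} (ho : IsOrient (ends0 n m clauses) o)
    (heven : ∀ x, Even (indeg o x)) (j : Fin m) : o (edgeA j) = clauseVertex j := by
  refine (ho (edgeA j)).resolve_left (head_ne_of_unique_inc ho (heven _) fun e he => ?_)
  induction e using edge_cases with
  | hchain q h => exact he.elim nofun nofun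
  | hleg q r h =>
    refine he.elim nofun fun h' => ?_
    rcases legTarget_eq_clauseVertex_or_baseVertex clauses q.1 q.2 r with ⟨_, h''⟩ | h'' <;>
      exact nomatch h''.symm.trans h'
  | ha j' =>
    exact he.elim (fun h => congrArg _ (Sum.inl.inj (Sum.inr.inj (Sum.inr.inj h)))) nofun
  | hb j' => exact he.elim nofun nofun
  | hparity h => exact he.elim nofun nofun

theorem edgeB_head {o : E0T n m → V0T n m} (ho : IsOrient (ends0 n m clauses) o)
    (heven : ∀ x, Even (indeg o x)) (j : Fin m) : o (edgeB j) = clauseVertex j := by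
  refine (ho (edgeB j)).resolve_left (head_ne_of_unique_inc ho (heven _) fun e he => ?_)
  induction e using edge_cases with
  | hchain q h => exact he.elim nofun nofun
  | hleg q r h =>
    refine he.elim nofun fun h' => ?_
    rcases legTarget_eq_clauseVertex_or_baseVertex clauses q.1 q.2 r with ⟨_, h''⟩ | h'' <;>
      exact nomatch h''.symm.trans h'
  | ha j' => exact he.elim nofun nofun
  | hb j' =>
    exact he.elim (fun h => congrArg _ (Sum.inl.inj (Sum.inr.inj (Sum.inr.inj (Sum.inr.inj h)))))
      nofun
  | hparity h => exact he.elim nofun nofun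

/-- If every chain vertex is a sink or a source, sinks and sources alternate along each chain. -/
theorem exists_assignment_of_sink_or_source {o : E0T n m → V0T n m}
    (ho : IsOrient (ends0 n m clauses) o)
    (hchain : ∀ q, (∀ e, Inc (ends0 n m clauses) e (chainVertex q) → o e = chainVertex q) ∨
      ∀ e, o e ≠ chainVertex q) :
    ∃ A : Fin n → Bool, ∀ q e, Inc (ends0 n m clauses) e (chainVertex q) →
      (o e = chainVertex q ↔ IsTrueAt A q) := by
  set S : Fin n × Fin (2 * m) → Prop := fun q =>
    ∀ e, Inc (ends0 n m clauses) e (chainVertex q) → o e = chainVertex q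
  have hsucc : ∀ (q : Fin n × Fin (2 * m)) (h : q.2.val + 1 < 2 * m),
      S (q.1, ⟨q.2.val + 1, h⟩) ↔ ¬ S q := by
    intro q h
    constructor
    · intro h₁ h₂
      have := (h₁ (chainEdge q h) (Or.inr rfl)).symm.trans (h₂ (chainEdge q h) (Or.inl rfl))
      rw [chainVertex_inj] at this
      simpa using congrArg (fun p => p.2.val) this
    · intro hq
      refine (hchain _).resolve_right fun hnone => ?_
      exact (ho (chainEdge q h)).elim ((hchain q).resolve_left hq _) (hnone _)
  refine ⟨fun i => decide (∃ h : 0 < 2 * m, S (i, ⟨0, h⟩)), fun q e he => ?_⟩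
  set A : Fin n → Bool := fun i => decide (∃ h : 0 < 2 * m, S (i, ⟨0, h⟩)) with hA
  have hind : ∀ i l (hl : l < 2 * m), S (i, ⟨l, hl⟩) ↔ IsTrueAt A (i, (⟨l, hl⟩ : Fin (2 * m))) := by
    intro i l
    induction l with
    | zero =>
      intro hl
      simp [IsTrueAt, hA, hl]
    | succ l ih =>
      intro hl
      rw [hsucc (i, ⟨l, by omega⟩) hl, isTrueAt_succ A (i, ⟨l, by omega⟩) hl, ih]
  rw [← hind q.1 q.2.val q.2.isLt]
  exact ⟨fun h => (hchain q).resolve_right fun hnone => hnone e h, fun h => h e he⟩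

theorem exists_assignment_of_orient (hdistinct : ∀ j, Function.Injective fun t => (clauses j t).1)
    {o : E0T n m → V0T n m} (ho : IsOrient (ends0 n m clauses) o)
    (heven : ∀ x, Even (indeg o x)) (hconf : ∀ c ∈ C0 n m clauses, {e | o e = c.2} ≠ c.1) :
    ∃ A : Fin n → Bool, ∀ j, ∃! t : Fin 3, A (clauses j t).1 = (clauses j t).2 := by
  obtain ⟨A, hA⟩ := exists_assignment_of_sink_or_source clauses ho fun q =>
    (chainVertex_condition_iff clauses ho q).1 ⟨heven _, fun e₁ e₂ hne h₁ h₂ =>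
      hconf ({e₁, e₂}, chainVertex q) (Or.inl ⟨q, e₁, e₂, hne, h₁, h₂, rfl⟩)⟩
  refine ⟨A, fun j => ?_⟩
  have h := (clauseVertex_condition_iff clauses ho (hdistinct j) (edgeA_head clauses ho heven j)
    (edgeB_head clauses ho heven j)).1
      ⟨heven _, hconf ({edgeA j, edgeB j}, clauseVertex j) (Or.inr ⟨j, rfl⟩)⟩
  refine (existsUnique_congr fun t => ?_).1 h
  rw [← isTrueAt_literalAt, ← hA _ (literalLeg clauses j t) (Or.inl rfl)]
  constructor
  · exact fun hc => (ho (literalLeg clauses j t)).resolve_right fun h' =>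
      hc (h'.trans (legTarget_literalAt clauses j t))
  · intro hx hc
    exact chainVertex_ne_clauseVertex (hx.symm.trans hc)

end Assignment

/-- a (1-in-3)-SAT instance (with three literals on three distinct variables
per clause) is satisfiable with exactly one true literal per clause iff the constructed
multigraph `G_I` has an even orientation violating no exact conflict pair of `C_I`. -/
theorem stmt_0 (n m : ℕ) (clauses : Fin m → Fin 3 → Fin n × Bool)
    (hdistinct : ∀ j, Function.Injective fun t => (clauses j t).1) :
    (∃ A : Fin n → Bool, ∀ j : Fin m, ∃! t : Fin 3, A (clauses j t).1 = (clauses j t).2) ↔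
    (∃ o : E0T n m → V0T n m, IsOrient (ends0 n m clauses) o ∧
        (∀ x, Even (indeg o x)) ∧
        ∀ c ∈ C0 n m clauses, {e | o e = c.2} ≠ c.1) := by
  constructor
  · rintro ⟨A, hA⟩
    exact ⟨assignmentOrient clauses A, exists_orient_of_assignment clauses hdistinct A hA⟩
  · rintro ⟨o, ho, heven, hconf⟩
    exact exists_assignment_of_orient clauses hdistinct ho heven hconf
end
end

section
/- Let G_1=(V_1,E_1) be a finite multigraph, V_0 a subset of V_1, and p: V_0 -> {0,1} a parity constraint. Let W = {v in V_0 : p(v)=1}, and let G_2 be obtained from G_1 by adding, for each v in W, a new (dummy) vertex v' and a new edge vv'; write W' for the set of dummy vertices. For an orientation o of G_1 let sat(o) be the number of v in V_0 with indegree congruent to p(v) modulo 2, and for an orientation o' of G_2 let sat'(o') be the number of vertices in V_0 union W' with even indegree. Then the maximum of sat'(o') over all orientations o' of G_2 equals |W| plus the maximum of sat(o) over all orientations o of G_1. -/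
open scoped Classical

noncomputable section

/-- Incidence map of the graph `G₂` obtained from `G₁` by attaching, at every vertex of
`W`, a pendant dummy vertex (an element of `W` in the right summand) by a single edge. -/
def dummyEnds {V₁ E₁ : Type*} (ends₁ : E₁ → V₁ × V₁) (W : Set V₁) :
    (E₁ ⊕ W) → (V₁ ⊕ W) × (V₁ ⊕ W)
  | Sum.inl e => (Sum.inl (ends₁ e).1, Sum.inl (ends₁ e).2)
  | Sum.inr w => (Sum.inl w.1, Sum.inr w)

/-- A map whose fibre over `x` is empty has indegree zero at `x`. -/
lemma indeg_eq_zero {V E : Type*} {o : E → V} {x : V} (h : ∀ e, o e ≠ x) : indeg o x = 0 := by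
  have : IsEmpty {e // o e = x} := ⟨fun e => h e.1 e.2⟩
  exact Nat.card_of_isEmpty

/-- A map with exactly one edge over `x` has indegree one at `x`. -/
lemma indeg_eq_one {V E : Type*} {o : E → V} {x : V} (e₀ : E) (h : ∀ e, o e = x ↔ e = e₀) :
    indeg o x = 1 := by
  unfold indeg
  simp only [h]
  exact Nat.card_unique

/-- Indegrees add up over a disjoint union of edge sets. -/
lemma indeg_sum {V E F : Type*} [Finite E] [Finite F] (o : E ⊕ F → V) (x : V) :
    indeg o x = indeg (o ∘ Sum.inl) x + indeg (o ∘ Sum.inr) x :=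
  (Nat.card_congr Equiv.subtypeSum).trans Nat.card_sum

/-- Enlarging the vertex set does not change the indegrees of the old vertices. -/
lemma indeg_inl_comp {V W E : Type*} (o : E → V) (v : V) :
    indeg (fun e => (Sum.inl (o e) : V ⊕ W)) (Sum.inl v) = indeg o v := by
  simp [indeg]

section Pendant

variable {V E : Type*} {ends : E → V × V} {W : Set V} {o' : E ⊕ W → V ⊕ W}

/-- An orientation of the graph with pendant edges restricts to the original graph. -/
lemma IsOrient.exists_restrict (h : IsOrient (dummyEnds ends W) o') :
    ∃ o : E → V, IsOrient ends o ∧ o' ∘ Sum.inl = fun e => Sum.inl (o e) := by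
  have key (e : E) : ∃ v, (v = (ends e).1 ∨ v = (ends e).2) ∧ o' (Sum.inl e) = Sum.inl v := by
    rcases h (Sum.inl e) with he | he
    · exact ⟨_, Or.inl rfl, he⟩
    · exact ⟨_, Or.inr rfl, he⟩
  choose o ho ho' using key
  exact ⟨o, ho, funext ho'⟩

variable [Finite V] [Finite E]

/-- A dummy vertex has even indegree exactly if its edge points away from it. -/
lemma IsOrient.even_indeg_inr_iff (h : IsOrient (dummyEnds ends W) o') (w : W) :
    Even (indeg o' (Sum.inr w)) ↔ o' (Sum.inr w) = Sum.inl w.1 := by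
  obtain ⟨o, -, ho⟩ := h.exists_restrict
  rw [indeg_sum, ho, indeg_eq_zero (o := fun e => Sum.inl (o e)) (by simp), zero_add]
  have hd (u : W) : o' (Sum.inr u) = Sum.inl u.1 ∨ o' (Sum.inr u) = Sum.inr u := h (Sum.inr u)
  rcases hd w with hw | hw
  · rw [indeg_eq_zero]
    · simp [hw]
    · intro u hu
      rcases hd u with hu' | hu' <;> simp_all
  · rw [indeg_eq_one w]
    · simp [hw]
    · intro u
      rcases hd u with hu' | hu' <;> simp only [Function.comp_apply, hu'] <;> grind

/-- A vertex without pendant edge keeps its indegree. -/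
lemma IsOrient.indeg_inl_of_notMem (h : IsOrient (dummyEnds ends W) o') {o : E → V}
    (ho : o' ∘ Sum.inl = fun e => Sum.inl (o e)) {v : V} (hv : v ∉ W) :
    indeg o' (Sum.inl v) = indeg o v := by
  rw [indeg_sum, ho, indeg_inl_comp, indeg_eq_zero (o := o' ∘ Sum.inr), add_zero]
  intro u hu
  rcases h (Sum.inr u) with hu' | hu' <;> simp_all [dummyEnds]
  exact hv (hu ▸ u.2)

/-- A pendant edge pointing to `v` raises the indegree of `v` by one. -/
lemma IsOrient.indeg_inl_of_head (h : IsOrient (dummyEnds ends W) o') {o : E → V}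
    (ho : o' ∘ Sum.inl = fun e => Sum.inl (o e)) {w : W} (hw : o' (Sum.inr w) = Sum.inl w.1) :
    indeg o' (Sum.inl w.1) = indeg o w.1 + 1 := by
  rw [indeg_sum, ho, indeg_inl_comp, indeg_eq_one (o := o' ∘ Sum.inr) w]
  intro u
  refine ⟨fun hu => ?_, fun hu => hu ▸ hw⟩
  rcases h (Sum.inr u) with hu' | hu' <;> simp_all [dummyEnds]
  exact Subtype.ext hu

end Pendant

/-- The vertices of `V₀` and the dummy vertices of even indegree are counted separately. -/
lemma card_even_eq {V E : Type*} [Finite V] {W : Set V} (V₀ : Set V)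
    (o' : E ⊕ W → V ⊕ W) :
    Nat.card {x : V ⊕ W //
        ((∃ v ∈ V₀, x = Sum.inl v) ∨ (∃ w, x = Sum.inr w)) ∧ Even (indeg o' x)} =
      {v | v ∈ V₀ ∧ Even (indeg o' (Sum.inl v))}.ncard +
        {w | Even (indeg o' (Sum.inr w))}.ncard := by
  rw [Nat.card_congr Equiv.subtypeSum, Nat.card_sum]
  simp only [← Nat.card_coe_set_eq, Set.coe_ofPred]
  simp

/-- If the pendant edge at `v ∈ V₀`, should there be one, points to `v`, then `v` has even indegree
exactly if it satisfies its parity constraint in the restricted orientation. -/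
lemma IsOrient.even_indeg_inl_iff {V E : Type*} [Finite V] [Finite E] {ends : E → V × V}
    {V₀ : Set V} {p : V → Fin 2}
    {o' : E ⊕ {v : V | v ∈ V₀ ∧ p v = 1} → V ⊕ {v : V | v ∈ V₀ ∧ p v = 1}}
    (h : IsOrient (dummyEnds ends {v : V | v ∈ V₀ ∧ p v = 1}) o') {o : E → V}
    (ho : o' ∘ Sum.inl = fun e => Sum.inl (o e)) {v : V} (hv : v ∈ V₀)
    (hd : ∀ hp : p v = 1, o' (Sum.inr ⟨v, hv, hp⟩) = Sum.inl v) :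
    Even (indeg o' (Sum.inl v)) ↔ indeg o v % 2 = (p v : ℕ) := by
  by_cases hp : p v = 1
  · have : (p v : ℕ) = 1 := by simp [hp]
    rw [h.indeg_inl_of_head ho (hd hp), this, Nat.even_iff]
    dsimp only
    omega
  · rw [h.indeg_inl_of_notMem ho (fun hW => hp hW.2), Nat.even_iff]
    have : (p v : ℕ) = 0 := by omega
    rw [this]

/-- attaching a pendant dummy vertex at every vertex with odd parity
constraint turns all constraints into evenness constraints: the maximum number of
satisfied constraints goes up by exactly `|W|`, the number of dummy vertices. -/
theorem stmt_2 {V₁ E₁ : Type*} [Finite V₁] [Finite E₁] (ends₁ : E₁ → V₁ × V₁)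
    (hloop : ∀ e, (ends₁ e).1 ≠ (ends₁ e).2)
    (V₀ : Set V₁) (p : V₁ → Fin 2) :
    sSup {s : ℕ |
        ∃ o' : (E₁ ⊕ {v : V₁ | v ∈ V₀ ∧ p v = 1}) → (V₁ ⊕ {v : V₁ | v ∈ V₀ ∧ p v = 1}),
          IsOrient (dummyEnds ends₁ {v : V₁ | v ∈ V₀ ∧ p v = 1}) o' ∧
          Nat.card {x : V₁ ⊕ {v : V₁ | v ∈ V₀ ∧ p v = 1} //
              ((∃ v ∈ V₀, x = Sum.inl v) ∨ (∃ w, x = Sum.inr w)) ∧ Even (indeg o' x)} = s}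
      =
      Nat.card {v : V₁ // v ∈ V₀ ∧ p v = 1} +
        sSup {s : ℕ | ∃ o : E₁ → V₁, IsOrient ends₁ o ∧
          Nat.card {v : V₁ // v ∈ V₀ ∧ indeg o v % 2 = (p v : ℕ)} = s} := by
  set W : Set V₁ := {v : V₁ | v ∈ V₀ ∧ p v = 1}
  have hWcard : Nat.card {v : V₁ // v ∈ V₀ ∧ p v = 1} = Nat.card W := rfl
  rw [hWcard]
  have hbdd : BddAbove {s : ℕ | ∃ o : E₁ → V₁, IsOrient ends₁ o ∧
      Nat.card {v : V₁ // v ∈ V₀ ∧ indeg o v % 2 = (p v : ℕ)} = s} := by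
    refine ⟨Nat.card V₁, ?_⟩
    rintro s ⟨o, -, rfl⟩
    exact Finite.card_subtype_le _
  have hbdd' : BddAbove {s : ℕ | ∃ o' : (E₁ ⊕ W) → (V₁ ⊕ W), IsOrient (dummyEnds ends₁ W) o' ∧
      Nat.card {x : V₁ ⊕ W //
        ((∃ v ∈ V₀, x = Sum.inl v) ∨ (∃ w, x = Sum.inr w)) ∧ Even (indeg o' x)} = s} := by
    refine ⟨Nat.card (V₁ ⊕ W), ?_⟩
    rintro s ⟨o', -, rfl⟩
    exact Finite.card_subtype_le _
  apply le_antisymm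
  · refine csSup_le ⟨_, fun e => (dummyEnds ends₁ W e).1, fun e => Or.inl rfl, rfl⟩ ?_
    rintro s ⟨o', h, rfl⟩
    obtain ⟨o, hor, ho⟩ := h.exists_restrict
    refine le_trans ?_ (Nat.add_le_add_left (le_csSup hbdd ⟨o, hor, rfl⟩) _)
    rw [card_even_eq]
    have hsub : {v | v ∈ V₀ ∧ Even (indeg o' (Sum.inl v))} ⊆
        {v | v ∈ V₀ ∧ indeg o v % 2 = (p v : ℕ)} ∪
          Subtype.val '' {w : W | Even (indeg o' (Sum.inr w))}ᶜ := by
      rintro v ⟨hv, hev⟩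
      by_cases hd : ∀ hp : p v = 1, o' (Sum.inr ⟨v, hv, hp⟩) = Sum.inl v
      · exact Or.inl ⟨hv, (h.even_indeg_inl_iff ho hv hd).1 hev⟩
      · push Not at hd
        obtain ⟨hp, hne⟩ := hd
        exact Or.inr ⟨⟨v, hv, hp⟩, fun hw => hne ((h.even_indeg_inr_iff _).1 hw), rfl⟩
    have hle := (Set.ncard_le_ncard hsub).trans (Set.ncard_union_le _ _)
    rw [Set.ncard_image_of_injective _ Subtype.val_injective] at hle
    have hcompl := Set.ncard_add_ncard_compl {w : W | Even (indeg o' (Sum.inr w))}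
    have hsat : Nat.card {v : V₁ // v ∈ V₀ ∧ indeg o v % 2 = (p v : ℕ)} =
      {v | v ∈ V₀ ∧ indeg o v % 2 = (p v : ℕ)}.ncard := rfl
    omega
  · obtain ⟨o, hor, hs⟩ := Nat.sSup_mem
      (s := {s : ℕ | ∃ o : E₁ → V₁, IsOrient ends₁ o ∧
        Nat.card {v : V₁ // v ∈ V₀ ∧ indeg o v % 2 = (p v : ℕ)} = s})
      ⟨_, fun e => (ends₁ e).1, fun e => Or.inl rfl, rfl⟩ hbdd
    rw [← hs]
    let o' : E₁ ⊕ W → V₁ ⊕ W := Sum.elim (fun e => Sum.inl (o e)) (fun w => Sum.inl w.1)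
    have h : IsOrient (dummyEnds ends₁ W) o' := by
      rintro (e | w)
      · exact (hor e).imp (congrArg Sum.inl) (congrArg Sum.inl)
      · exact Or.inl rfl
    refine le_csSup hbdd' ⟨o', h, ?_⟩
    have hdummy : {w : W | Even (indeg o' (Sum.inr w))} = Set.univ :=
      Set.eq_univ_of_forall fun w => (h.even_indeg_inr_iff w).2 rfl
    have hV₀ : {v | v ∈ V₀ ∧ Even (indeg o' (Sum.inl v))} =
        {v | v ∈ V₀ ∧ indeg o v % 2 = (p v : ℕ)} :=
      Set.ext fun v => and_congr_right fun hv => h.even_indeg_inl_iff rfl hv fun _ => rfl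
    rw [card_even_eq, hdummy, hV₀, Set.ncard_univ, add_comm]
    rfl
end
end

section
/- For every integer k >= 2 there exists a switching network N_k, that is, a finite multigraph with k distinguished degree-1 input leaves a_1,...,a_k (whose pendant edges are the input edges), k distinguished degree-1 output leaves b_1,...,b_k (whose pendant edges are the output edges), and a family of pairwise disjoint exact conflict pairs, with the following properties, where an orientation is called valid if every non-leaf vertex has even indegree and no exact conflict pair equals the set of incoming edges at its vertex, an input edge is right-oriented if its head is not its leaf a_i, and an output edge is right-oriented if its head is its leaf b_j: (P0) every assignment of orientations to the k input edges extends to a valid orientation of N_k; (P1) in every valid orientation, the number of right-oriented output edges equals the number of right-oriented input edges; (P2) whenever exactly l input edges are right-oriented with 0 < l < k, there is a valid orientation with those input orientations in which the output edge at b_1 is right-oriented and the output edge at b_2 is not. Moreover, N_k can be chosen with at most 6k non-leaf vertices. -/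
open scoped Classical

noncomputable section

/-- A switching network with `k` inputs and `k` outputs: a finite multigraph with `2k`
distinct degree-one leaves `a 0, …, a (k-1)` (inputs, with pendant input edges `ain i`) and
`b 0, …, b (k-1)` (outputs, with pendant output edges `bout i`), together with a family of
pairwise disjoint exact conflict pairs. -/
structure SwitchNet (k : ℕ) where
  V : Type
  E : Type
  finV : Finite V
  finE : Finite E
  ends : E → V × V
  noloop : ∀ e, (ends e).1 ≠ (ends e).2
  a : Fin k → V
  b : Fin k → V
  ain : Fin k → E
  bout : Fin k → E
  leaves_inj : Function.Injective (Sum.elim a b : Fin k ⊕ Fin k → V)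
  ain_inc : ∀ i, Inc ends (ain i) (a i)
  a_deg : ∀ i, Nat.card {e : E // Inc ends e (a i)} = 1
  bout_inc : ∀ i, Inc ends (bout i) (b i)
  b_deg : ∀ i, Nat.card {e : E // Inc ends e (b i)} = 1
  conf : Set (Set E × V)
  conf_pairs : ∀ c ∈ conf, (∃ e₁ e₂ : E, e₁ ≠ e₂ ∧ c.1 = ({e₁, e₂} : Set E)) ∧
    ∀ e ∈ c.1, Inc ends e c.2
  conf_disj : ∀ c₁ ∈ conf, ∀ c₂ ∈ conf, c₁ ≠ c₂ → c₁.2 = c₂.2 → Disjoint c₁.1 c₂.1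

namespace SwitchNet

variable {k : ℕ} (N : SwitchNet k)

/-- The leaves of the network. -/
def IsLeaf (x : N.V) : Prop := (∃ i, x = N.a i) ∨ (∃ i, x = N.b i)

/-- A valid orientation: every non-leaf vertex has even indegree, and no exact conflict
pair equals the set of incoming edges at its vertex. -/
def Valid (o : N.E → N.V) : Prop :=
  IsOrient N.ends o ∧ (∀ x, ¬ N.IsLeaf x → Even (indeg o x)) ∧
    ∀ c ∈ N.conf, {e | o e = c.2} ≠ c.1

/-- The input edge `ain i` is right-oriented: its head is not the leaf `a i`. -/
def RightIn (o : N.E → N.V) (i : Fin k) : Prop := o (N.ain i) ≠ N.a i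

/-- The output edge `bout i` is right-oriented: its head is the leaf `b i`. -/
def RightOut (o : N.E → N.V) (i : Fin k) : Prop := o (N.bout i) = N.b i

/-- Property P0: every assignment of orientations to the input edges extends to a
valid orientation. -/
def P0 : Prop :=
  ∀ s : Fin k → Bool, ∃ o, N.Valid o ∧ ∀ i, (N.RightIn o i ↔ s i = true)

/-- Property P1: in every valid orientation, the number of right-oriented output edges
equals the number of right-oriented input edges. -/
def P1 : Prop :=
  ∀ o, N.Valid o → Nat.card {i : Fin k // N.RightOut o i} = Nat.card {i : Fin k // N.RightIn o i}

/-- Property P2: whenever some but not all input edges are right-oriented, there is a valid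
orientation with those input orientations in which `bout 0` (the output at `b₁`) is
right-oriented and `bout 1` (the output at `b₂`) is not. -/
def P2 : Prop :=
  ∀ s : Fin k → Bool, (∃ i, s i = true) → (∃ i, s i = false) →
    ∃ o, N.Valid o ∧ (∀ i, N.RightIn o i ↔ s i = true) ∧
      ∀ (h₀ : 0 < k) (h₁ : 1 < k), N.RightOut o ⟨0, h₀⟩ ∧ ¬ N.RightOut o ⟨1, h₁⟩

end SwitchNet

/-- A circuit of two-input, two-output switches: `src` identifies the wires with the input
leaves together with the two output ports of every switch, and `tgt` identifies them with the
output leaves together with the two input ports of every switch. -/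
structure Circuit (k : ℕ) where
  S : Type
  W : Type
  finS : Fintype S
  finW : Fintype W
  src : W ≃ Fin k ⊕ S × Bool
  tgt : W ≃ Fin k ⊕ S × Bool

namespace Circuit

variable {k : ℕ} (C : Circuit k)

/-- The leaves, followed by an input vertex `(s, false)` and an output vertex `(s, true)` for
every switch `s`. -/
abbrev Vtx : Type := (Fin k ⊕ Fin k) ⊕ C.S × Bool

/-- The wires, followed by two parallel internal edges for every switch. -/
abbrev Edge : Type := C.W ⊕ C.S × Bool

/-- The vertex at which a wire starts. -/
def srcVtx (w : C.W) : C.Vtx := (C.src w).elim (fun i => .inl (.inl i)) fun p => .inr (p.1, true)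

/-- The vertex at which a wire ends. -/
def tgtVtx (w : C.W) : C.Vtx := (C.tgt w).elim (fun i => .inl (.inr i)) fun p => .inr (p.1, false)

/-- The incidence map of the network of a circuit. -/
def ends : C.Edge → C.Vtx × C.Vtx
  | .inl w => (C.srcVtx w, C.tgtVtx w)
  | .inr (s, _) => (.inr (s, false), .inr (s, true))

/-- The four edges at the vertex `(s, p)`: internal for `q = true`, wires for `q = false`. -/
def port (s : C.S) (p : Bool) : Bool → Bool → C.Edge
  | true, i => .inr (s, i)
  | false, i => .inl ((bif p then C.src else C.tgt).symm (.inr (s, i)))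

lemma srcVtx_ne_tgtVtx (w w' : C.W) : C.srcVtx w ≠ C.tgtVtx w' := by
  unfold srcVtx tgtVtx
  rcases C.src w with i | ⟨s, i⟩ <;> rcases C.tgt w' with j | ⟨t, j⟩ <;> simp

lemma port_inj (s : C.S) (p : Bool) {q i q' i' : Bool} (h : C.port s p q i = C.port s p q' i') :
    q = q' ∧ i = i' := by
  cases q <;> cases q' <;> simp_all [port]

lemma inc_port (s : C.S) (p q i : Bool) : Inc C.ends (C.port s p q i) (.inr (s, p)) := by
  cases p <;> cases q <;> simp [Inc, port, ends, srcVtx, tgtVtx]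

lemma exists_port {e : C.Edge} {s : C.S} {p : Bool} (h : Inc C.ends e (.inr (s, p))) :
    ∃ q i, e = C.port s p q i := by
  rcases e with w | ⟨t, i⟩
  · refine ⟨false, ?_⟩
    rcases h with h | h
    · rcases hw : C.src w with j | ⟨t, j⟩ <;> simp [ends, srcVtx, hw] at h
      obtain ⟨rfl, rfl⟩ := h
      exact ⟨j, by simp [port, ← hw]⟩
    · rcases hw : C.tgt w with j | ⟨t, j⟩ <;> simp [ends, tgtVtx, hw] at h
      obtain ⟨rfl, rfl⟩ := h
      exact ⟨j, by simp [port, ← hw]⟩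
  · refine ⟨true, i, ?_⟩
    rcases h with h | h <;> simp [ends] at h <;> simp [port, h.1]

lemma inc_input_iff (e : C.Edge) (i : Fin k) :
    Inc C.ends e (.inl (.inl i)) ↔ e = .inl (C.src.symm (.inl i)) := by
  rcases e with w | ⟨t, j⟩
  · rcases hw : C.src w with j | ⟨t, j⟩ <;> rcases hw' : C.tgt w with j' | ⟨t', j'⟩ <;>
      simp [Inc, ends, srcVtx, tgtVtx, hw, hw', Equiv.eq_symm_apply]
  · simp [Inc, ends]

lemma inc_output_iff (e : C.Edge) (i : Fin k) :
    Inc C.ends e (.inl (.inr i)) ↔ e = .inl (C.tgt.symm (.inl i)) := by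
  rcases e with w | ⟨t, j⟩
  · rcases hw : C.src w with j | ⟨t, j⟩ <;> rcases hw' : C.tgt w with j' | ⟨t', j'⟩ <;>
      simp [Inc, ends, srcVtx, tgtVtx, hw, hw', Equiv.eq_symm_apply]
  · simp [Inc, ends]

/-- The conflict at the vertex `(s, p)` consisting of its internal edges (`q = true`) or of its
wires (`q = false`). -/
def conflict (x : C.S × Bool × Bool) : Set C.Edge × C.Vtx :=
  ({C.port x.1 x.2.1 x.2.2 false, C.port x.1 x.2.1 x.2.2 true}, .inr (x.1, x.2.1))

/-- The switching network of a circuit. -/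
abbrev toNet : SwitchNet k where
  V := C.Vtx
  E := C.Edge
  finV := by have := C.finS; infer_instance
  finE := by have := C.finS; have := C.finW; infer_instance
  ends := C.ends
  noloop := by
    rintro (w | ⟨s, i⟩)
    · exact C.srcVtx_ne_tgtVtx w w
    · simp [ends]
  a i := .inl (.inl i)
  b i := .inl (.inr i)
  ain i := .inl (C.src.symm (.inl i))
  bout i := .inl (C.tgt.symm (.inl i))
  leaves_inj := by rintro (i | i) (j | j) h <;> simp_all
  ain_inc i := (C.inc_input_iff _ i).2 rfl
  a_deg i := by simp [inc_input_iff]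
  bout_inc i := (C.inc_output_iff _ i).2 rfl
  b_deg i := by simp [inc_output_iff]
  conf := Set.range C.conflict
  conf_pairs := by
    rintro _ ⟨⟨s, p, q⟩, rfl⟩
    refine ⟨⟨_, _, fun h => ?_, rfl⟩, ?_⟩
    · simpa using (C.port_inj s p h).2
    · rintro e (rfl | rfl) <;> exact C.inc_port ..
  conf_disj := by
    rintro _ ⟨⟨s, p, q⟩, rfl⟩ _ ⟨⟨s', p', q'⟩, rfl⟩ hne hv
    simp only [conflict, Sum.inr.injEq, Prod.mk.injEq] at hv
    obtain ⟨rfl, rfl⟩ := hv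
    rw [Set.disjoint_left]
    have hq : q ≠ q' := by rintro rfl; exact hne rfl
    rintro e (rfl | rfl) (h | h) <;> exact hq (C.port_inj s p h).1

/-- The condition a valid orientation imposes at a switch vertex, in terms of which of its four
edges are incoming. -/
def LocalValid (g : Bool → Bool → Bool) : Prop :=
  Even ((g false false).toNat + (g false true).toNat + (g true false).toNat + (g true true).toNat) ∧
    ∀ q, ¬ (g q false = true ∧ g q true = true ∧ g (!q) false = false ∧ g (!q) true = false)

/-- Whether an edge at the vertex `(s, p)` is incoming. -/
def incoming (o : C.Edge → C.Vtx) (s : C.S) (p q i : Bool) : Bool :=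
  decide (o (C.port s p q i) = .inr (s, p))

variable {C} {o : C.Edge → C.Vtx}

lemma inc_of_head (ho : IsOrient C.ends o) {e : C.Edge} {x : C.Vtx} (h : o e = x) :
    Inc C.ends e x := by
  rcases ho e with h' | h'
  · exact .inl (h' ▸ h)
  · exact .inr (h' ▸ h)

lemma indeg_switch (ho : IsOrient C.ends o) (s : C.S) (p : Bool) :
    indeg o (.inr (s, p)) = (C.incoming o s p false false).toNat +
      (C.incoming o s p false true).toNat + (C.incoming o s p true false).toNat +
      (C.incoming o s p true true).toNat := by
  have e : {x : Bool × Bool // C.incoming o s p x.1 x.2 = true} ≃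
      {e // o e = (.inr (s, p) : C.Vtx)} := by
    refine Equiv.ofBijective
      (fun x => ⟨C.port s p x.1.1 x.1.2, by simpa [incoming] using x.2⟩) ⟨?_, ?_⟩
    · rintro ⟨⟨q, i⟩, h⟩ ⟨⟨q', i'⟩, h'⟩ hh
      have := C.port_inj s p (congrArg Subtype.val hh)
      simp_all
    · rintro ⟨e, he⟩
      obtain ⟨q, i, rfl⟩ := C.exists_port (inc_of_head ho he)
      exact ⟨⟨(q, i), by simpa [incoming] using he⟩, rfl⟩
  rw [indeg, ← Nat.card_congr e, Nat.card_eq_fintype_card, Fintype.card_subtype,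
    Finset.card_filter, Fintype.sum_prod_type]
  generalize C.incoming o s p = g
  simp only [Fintype.sum_bool]
  cases g false false <;> cases g false true <;> cases g true false <;> cases g true true <;> rfl

lemma head_set_eq_conflict_iff (ho : IsOrient C.ends o) (s : C.S) (p q : Bool) :
    {e | o e = (.inr (s, p) : C.Vtx)} = (C.conflict (s, p, q)).1 ↔
      C.incoming o s p q false = true ∧ C.incoming o s p q true = true ∧
        C.incoming o s p (!q) false = false ∧ C.incoming o s p (!q) true = false := by
  simp only [incoming, decide_eq_true_eq, decide_eq_false_iff_not]
  constructor
  · intro h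
    have hmem (e) : o e = (.inr (s, p) : C.Vtx) ↔
        e = C.port s p q false ∨ e = C.port s p q true := by
      simpa [conflict] using Set.ext_iff.1 h e
    refine ⟨(hmem _).2 (.inl rfl), (hmem _).2 (.inr rfl), ?_, ?_⟩ <;>
    · rw [hmem]
      rintro (h | h) <;> simpa using (C.port_inj s p h).1
  · rintro ⟨h₁, h₂, h₃, h₄⟩
    ext e
    simp only [conflict, Set.mem_ofPred_eq, Set.mem_insert_iff, Set.mem_singleton_iff]
    constructor
    · intro he
      obtain ⟨q', i, rfl⟩ := C.exists_port (inc_of_head ho he)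
      by_cases hq : q' = q
      · subst hq
        cases i <;> simp
      · obtain rfl : q' = !q := by cases q <;> cases q' <;> simp_all
        cases i <;> contradiction
    · rintro (rfl | rfl) <;> assumption

lemma isLeaf_inl (x : Fin k ⊕ Fin k) : C.toNet.IsLeaf (.inl x) := by
  rcases x with i | i
  · exact .inl ⟨i, rfl⟩
  · exact .inr ⟨i, rfl⟩

lemma not_isLeaf_inr (x : C.S × Bool) : ¬ C.toNet.IsLeaf (.inr x) := by
  rintro (⟨i, h⟩ | ⟨i, h⟩) <;> cases h

lemma valid_iff : C.toNet.Valid o ↔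
    IsOrient C.ends o ∧ ∀ s p, LocalValid (C.incoming o s p) := by
  refine and_congr_right fun ho => ?_
  constructor
  · rintro ⟨heven, hconf⟩ s p
    refine ⟨?_, fun q => ?_⟩
    · rw [← indeg_switch ho]
      exact heven _ (not_isLeaf_inr _)
    · rw [← head_set_eq_conflict_iff ho]
      exact hconf _ ⟨(s, p, q), rfl⟩
  · intro h
    refine ⟨?_, ?_⟩
    · rintro (x | ⟨s, p⟩) hx
      · exact absurd (isLeaf_inl x) hx
      · have := (h s p).1
        rwa [← indeg_switch ho] at this
    · rintro _ ⟨⟨s, p, q⟩, rfl⟩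
      exact (head_set_eq_conflict_iff ho s p q).not.2 ((h s p).2 q)

/-- Whether a wire is directed from its source to its target. -/
def rightward (o : C.Edge → C.Vtx) (w : C.W) : Bool := decide (o (.inl w) = C.tgtVtx w)

lemma rightward_eq_false_iff (ho : IsOrient C.ends o) (w : C.W) :
    rightward o w = false ↔ o (.inl w) = C.srcVtx w := by
  have h : o (.inl w) = C.srcVtx w ∨ o (.inl w) = C.tgtVtx w := ho (.inl w)
  have := C.srcVtx_ne_tgtVtx w w
  simp only [rightward, decide_eq_false_iff_not]
  grind

lemma rightIn_iff (ho : IsOrient C.ends o) (i : Fin k) :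
    C.toNet.RightIn o i ↔ rightward o (C.src.symm (.inl i)) = true := by
  rw [← Bool.not_eq_false, rightward_eq_false_iff ho]
  simp [srcVtx, SwitchNet.RightIn, toNet]

lemma rightOut_iff (o : C.Edge → C.Vtx) (i : Fin k) :
    C.toNet.RightOut o i ↔ rightward o (C.tgt.symm (.inl i)) = true := by
  simp [rightward, tgtVtx, SwitchNet.RightOut, toNet]

lemma incoming_input_wire (o : C.Edge → C.Vtx) (s : C.S) (i : Bool) :
    C.incoming o s false false i = rightward o (C.tgt.symm (.inr (s, i))) := by
  rw [Bool.eq_iff_iff]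
  simp only [incoming, rightward, decide_eq_true_eq]
  simp [tgtVtx, port]

lemma incoming_output_wire (ho : IsOrient C.ends o) (s : C.S) (i : Bool) :
    C.incoming o s true false i = !rightward o (C.src.symm (.inr (s, i))) := by
  have := rightward_eq_false_iff ho (C.src.symm (.inr (s, i)))
  rw [Bool.eq_iff_iff, Bool.not_eq_true', this, incoming, decide_eq_true_eq]
  simp [srcVtx, port]

lemma incoming_internal (ho : IsOrient C.ends o) (s : C.S) (i : Bool) :
    C.incoming o s true true i = !C.incoming o s false true i := by
  rcases ho (.inr (s, i)) with h | h <;> simp [incoming, port, h, ends]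

lemma conservation_of_localValid {g h : Bool → Bool → Bool} (hg : LocalValid g)
    (hh : LocalValid h) (hi : ∀ i, h true i = !g true i) :
    (g false false).toNat + (g false true).toNat =
      (!h false false).toNat + (!h false true).toNat := by
  simp only [LocalValid, Bool.forall_bool, Bool.not_false, Bool.not_true, hi] at hg hh
  clear hi
  revert hg hh
  generalize g false false = a
  generalize g false true = b
  generalize g true false = x
  generalize g true true = y
  generalize h false false = c
  generalize h false true = d
  cases a <;> cases b <;> cases x <;> cases y <;> cases c <;> cases d <;> decide

lemma switch_conservation (hv : C.toNet.Valid o) (s : C.S) :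
    (rightward o (C.tgt.symm (.inr (s, false)))).toNat +
      (rightward o (C.tgt.symm (.inr (s, true)))).toNat =
    (rightward o (C.src.symm (.inr (s, false)))).toNat +
      (rightward o (C.src.symm (.inr (s, true)))).toNat := by
  obtain ⟨ho, h⟩ := valid_iff.1 hv
  have := conservation_of_localValid (h s false) (h s true) (incoming_internal ho s)
  simpa [incoming_input_wire, incoming_output_wire ho] using this

lemma card_eq_sum_toNat (f : Fin k → Bool) :
    Nat.card {i // f i = true} = ∑ i, (f i).toNat := by
  rw [Nat.card_eq_fintype_card, Fintype.card_subtype, Finset.card_filter]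
  refine Finset.sum_congr rfl fun i _ => ?_
  cases f i <;> rfl

theorem toNet_P1 (C : Circuit k) : C.toNet.P1 := by
  intro o hv
  have := C.finS
  have := C.finW
  have ho := hv.1
  simp only [rightIn_iff ho, rightOut_iff, card_eq_sum_toNat]
  have hsum : ∑ x, (rightward o (C.tgt.symm x)).toNat = ∑ x, (rightward o (C.src.symm x)).toNat :=
    (Equiv.sum_comp C.tgt.symm fun w => (rightward o w).toNat).trans
      (Equiv.sum_comp C.src.symm fun w => (rightward o w).toNat).symm
  have hswitch := Finset.sum_congr rfl fun s (_ : s ∈ Finset.univ) => switch_conservation hv s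
  simp only [Fintype.sum_sum_type, Fintype.sum_prod_type, Fintype.sum_bool] at hsum
  simp only [Finset.sum_add_distrib] at hsum hswitch
  omega

/-- A flow through a circuit sends as many signals out of every switch as into it. -/
def IsFlow (C : Circuit k) (f : C.W → Bool) : Prop :=
  ∀ s, (f (C.tgt.symm (.inr (s, false)))).toNat + (f (C.tgt.symm (.inr (s, true)))).toNat =
    (f (C.src.symm (.inr (s, false)))).toNat + (f (C.src.symm (.inr (s, true)))).toNat

/-- The orientation realising a flow. At each switch, as many internal edges enter the input
vertex as there are signals passing through. -/
def ofFlow (f : C.W → Bool) : C.Edge → C.Vtx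
  | .inl w => if f w then C.tgtVtx w else C.srcVtx w
  | .inr (s, i) => .inr (s, !
      bif i then f (C.tgt.symm (.inr (s, false))) && f (C.tgt.symm (.inr (s, true)))
      else f (C.tgt.symm (.inr (s, false))) || f (C.tgt.symm (.inr (s, true))))

lemma isOrient_ofFlow (f : C.W → Bool) : IsOrient C.ends (ofFlow f) := by
  rintro (w | ⟨s, i⟩)
  · simp only [ofFlow, ends]
    split_ifs <;> simp
  · simp only [ofFlow, ends]
    generalize (!(bif i then _ else _ : Bool)) = b
    cases b <;> simp

lemma rightward_ofFlow (f : C.W → Bool) (w : C.W) : rightward (ofFlow f) w = f w := by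
  have := C.srcVtx_ne_tgtVtx w w
  cases h : f w <;> simp [rightward, ofFlow, h, this]

lemma valid_ofFlow {f : C.W → Bool} (hf : C.IsFlow f) : C.toNet.Valid (ofFlow f) := by
  refine valid_iff.2 ⟨isOrient_ofFlow f, fun s p => ?_⟩
  have h₀ : C.incoming (ofFlow f) s false true false =
      (f (C.tgt.symm (.inr (s, false))) || f (C.tgt.symm (.inr (s, true)))) := by
    simp [incoming, port, ofFlow]
  have h₁ : C.incoming (ofFlow f) s false true true =
      (f (C.tgt.symm (.inr (s, false))) && f (C.tgt.symm (.inr (s, true)))) := by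
    simp [incoming, port, ofFlow]
  have hs := hf s
  have ho := isOrient_ofFlow f
  cases p <;>
    simp only [LocalValid, incoming_internal ho, incoming_output_wire ho, incoming_input_wire,
      rightward_ofFlow, h₀, h₁, Bool.forall_bool, Bool.not_false, Bool.not_true] <;>
    generalize f (C.tgt.symm (.inr (s, false))) = a at * <;>
    generalize f (C.tgt.symm (.inr (s, true))) = b at * <;>
    generalize f (C.src.symm (.inr (s, false))) = c at * <;>
    generalize f (C.src.symm (.inr (s, true))) = d at * <;>
    clear h₀ h₁ <;>
    revert a b c d <;> decide

lemma card_not_isLeaf (C : Circuit k) :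
    Nat.card {x : C.toNet.V // ¬ C.toNet.IsLeaf x} = Nat.card (C.S × Bool) := by
  refine (Nat.card_congr (Equiv.ofBijective
    (fun x => (⟨.inr x, not_isLeaf_inr x⟩ : {x : C.toNet.V // ¬ C.toNet.IsLeaf x}))
    ⟨fun x y h => ?_, ?_⟩)).symm
  · exact Sum.inr_injective (congrArg Subtype.val h)
  · rintro ⟨x | x, hx⟩
    · exact absurd (isLeaf_inl x) hx
    · exact ⟨x, rfl⟩

end Circuit

/-! ### The extraction circuit -/

namespace Extraction

variable {m : ℕ}

/-- The switches: a chain extracting a signal, then a chain extracting an absence of signal. -/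
abbrev Switch (m : ℕ) : Type := Fin (m + 1) ⊕ Fin m

/-- The wires. -/
inductive Wire (m : ℕ) : Type
  /-- The first chain, from input `0` to output `0`. -/
  | fstChain (j : Fin (m + 2))
  /-- From input `j + 1` to the `j`-th switch of the first chain. -/
  | input (j : Fin (m + 1))
  /-- The second chain, from switch `0` of the first chain to output `1`. -/
  | sndChain (j : Fin (m + 1))
  /-- From switch `j + 1` of the first chain to switch `j` of the second chain. -/
  | link (j : Fin m)
  /-- From switch `j` of the second chain to output `j + 2`. -/
  | output (j : Fin m)

/-- The wires as a sum type. -/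
def wireEquiv (m : ℕ) :
    Wire m ≃ Fin (m + 2) ⊕ Fin (m + 1) ⊕ Fin (m + 1) ⊕ Fin m ⊕ Fin m where
  toFun
    | .fstChain j => .inl j
    | .input j => .inr (.inl j)
    | .sndChain j => .inr (.inr (.inl j))
    | .link j => .inr (.inr (.inr (.inl j)))
    | .output j => .inr (.inr (.inr (.inr j)))
  invFun
    | .inl j => .fstChain j
    | .inr (.inl j) => .input j
    | .inr (.inr (.inl j)) => .sndChain j
    | .inr (.inr (.inr (.inl j))) => .link j
    | .inr (.inr (.inr (.inr j))) => .output j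
  left_inv := by rintro (j | j | j | j | j) <;> rfl
  right_inv := by rintro (j | j | j | j | j) <;> rfl

instance : Fintype (Wire m) := .ofEquiv _ (wireEquiv m).symm

/-- The source of a wire. -/
def srcFun : Wire m → Fin (m + 2) ⊕ Switch m × Bool
  | .fstChain j => Fin.cases (.inl 0) (fun j => .inr (.inl j, false)) j
  | .input j => .inl j.succ
  | .sndChain j => Fin.cases (.inr (.inl 0, true)) (fun j => .inr (.inr j, false)) j
  | .link j => .inr (.inl j.succ, true)
  | .output j => .inr (.inr j, true)

/-- The target of a wire. -/
def tgtFun : Wire m → Fin (m + 2) ⊕ Switch m × Bool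
  | .fstChain j => Fin.lastCases (.inl 0) (fun j => .inr (.inl j, false)) j
  | .input j => .inr (.inl j, true)
  | .sndChain j => Fin.lastCases (.inl 1) (fun j => .inr (.inr j, false)) j
  | .link j => .inr (.inr j, true)
  | .output j => .inl j.succ.succ

lemma card_wire : Fintype.card (Wire m) = Fintype.card (Fin (m + 2) ⊕ Switch m × Bool) := by
  rw [Fintype.card_congr (wireEquiv m)]
  simp only [Fintype.card_sum, Fintype.card_fin, Fintype.card_prod, Fintype.card_bool]
  omega

lemma srcFun_bijective : Function.Bijective (srcFun (m := m)) := by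
  refine (Fintype.bijective_iff_surjective_and_card _).2 ⟨?_, card_wire⟩
  rintro (j | ⟨j | j, _ | _⟩)
  · refine Fin.cases ⟨.fstChain 0, rfl⟩ (fun j => ⟨.input j, rfl⟩) j
  · exact ⟨.fstChain j.succ, rfl⟩
  · exact Fin.cases ⟨.sndChain 0, rfl⟩ (fun j => ⟨.link j, rfl⟩) j
  · exact ⟨.sndChain j.succ, rfl⟩
  · exact ⟨.output j, rfl⟩

lemma tgtFun_bijective : Function.Bijective (tgtFun (m := m)) := by
  refine (Fintype.bijective_iff_surjective_and_card _).2 ⟨?_, card_wire⟩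
  rintro (j | ⟨j | j, _ | _⟩)
  · refine Fin.cases ⟨.fstChain (Fin.last _), by simp [tgtFun]⟩ (fun j => ?_) j
    exact Fin.cases ⟨.sndChain (Fin.last _), by simp [tgtFun]⟩ (fun j => ⟨.output j, rfl⟩) j
  · exact ⟨.fstChain j.castSucc, by simp [tgtFun]⟩
  · exact ⟨.input j, rfl⟩
  · exact ⟨.sndChain j.castSucc, by simp [tgtFun]⟩
  · exact ⟨.link j, rfl⟩

/-- The extraction circuit. -/
abbrev circuit (m : ℕ) : Circuit (m + 2) where
  S := Switch m
  W := Wire m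
  finS := inferInstance
  finW := inferInstance
  src := .ofBijective srcFun srcFun_bijective
  tgt := .ofBijective tgtFun tgtFun_bijective

lemma src_symm_eq {x : Fin (m + 2) ⊕ Switch m × Bool} {w : Wire m} (h : srcFun w = x) :
    (circuit m).src.symm x = w :=
  (Equiv.symm_apply_eq _).2 h.symm

lemma tgt_symm_eq {x : Fin (m + 2) ⊕ Switch m × Bool} {w : Wire m} (h : tgtFun w = x) :
    (circuit m).tgt.symm x = w :=
  (Equiv.symm_apply_eq _).2 h.symm

/-- Whether one of the inputs up to `j` carries a signal. -/
def anyUpTo (s : Fin (m + 2) → Bool) (j : Fin (m + 2)) : Bool := decide (∃ i ≤ j, s i = true)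

/-- The signal passed on by switch `j` of the first chain. -/
def rest (s : Fin (m + 2) → Bool) (j : Fin (m + 1)) : Bool := anyUpTo s j.castSucc && s j.succ

/-- Whether all signals passed on by the first chain up to switch `j` are present. -/
def allUpTo (s : Fin (m + 2) → Bool) (j : Fin (m + 1)) : Bool := decide (∀ i ≤ j, rest s i = true)

/-- The flow extracting a signal to output `0` and an absence of signal to output `1`. -/
def flow (s : Fin (m + 2) → Bool) : Wire m → Bool
  | .fstChain j => anyUpTo s j
  | .input j => s j.succ
  | .sndChain j => allUpTo s j
  | .link j => rest s j.succ
  | .output j => allUpTo s j.castSucc || rest s j.succ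

lemma le_succ_iff {n : ℕ} {i : Fin (n + 1)} {j : Fin n} :
    i ≤ j.succ ↔ i ≤ j.castSucc ∨ i = j.succ := by
  simp only [Fin.le_def, Fin.ext_iff, Fin.val_succ, Fin.val_castSucc]
  omega

lemma anyUpTo_succ (s : Fin (m + 2) → Bool) (j : Fin (m + 1)) :
    anyUpTo s j.succ = (anyUpTo s j.castSucc || s j.succ) := by
  rw [Bool.eq_iff_iff]
  simp [anyUpTo, le_succ_iff, or_and_right, exists_or]

lemma anyUpTo_zero (s : Fin (m + 2) → Bool) : anyUpTo s 0 = s 0 := by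
  rw [Bool.eq_iff_iff]
  simp [anyUpTo]

lemma allUpTo_succ (s : Fin (m + 2) → Bool) (j : Fin m) :
    allUpTo s j.succ = (allUpTo s j.castSucc && rest s j.succ) := by
  rw [Bool.eq_iff_iff]
  simp [allUpTo, le_succ_iff, or_imp, forall_and]

lemma allUpTo_zero (s : Fin (m + 2) → Bool) : allUpTo s 0 = rest s 0 := by
  rw [Bool.eq_iff_iff]
  simp [allUpTo]

lemma src_symm_rest (s : Fin (m + 2) → Bool) (j : Fin (m + 1)) :
    flow s ((circuit m).src.symm (.inr (.inl j, true))) = rest s j := by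
  refine Fin.cases ?_ (fun j => ?_) j
  · rw [src_symm_eq (w := .sndChain 0) (by rfl)]
    exact allUpTo_zero s
  · rw [src_symm_eq (w := .link j) (by rfl)]
    rfl

lemma isFlow_flow (s : Fin (m + 2) → Bool) : (circuit m).IsFlow (flow s) := by
  rintro (j | j)
  · rw [src_symm_rest, tgt_symm_eq (w := .fstChain j.castSucc) (by simp [tgtFun]),
      tgt_symm_eq (w := .input j) (by rfl), src_symm_eq (w := .fstChain j.succ) (by rfl)]
    simp only [flow, anyUpTo_succ, rest]
    cases anyUpTo s j.castSucc <;> cases s j.succ <;> rfl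
  · rw [tgt_symm_eq (w := .sndChain j.castSucc) (by simp [tgtFun]),
      tgt_symm_eq (w := .link j) (by rfl), src_symm_eq (w := .sndChain j.succ) (by rfl),
      src_symm_eq (w := .output j) (by rfl)]
    simp only [flow, allUpTo_succ]
    cases allUpTo s j.castSucc <;> cases rest s j.succ <;> rfl

lemma flow_src (s : Fin (m + 2) → Bool) (i : Fin (m + 2)) :
    flow s ((circuit m).src.symm (.inl i)) = s i := by
  refine Fin.cases ?_ (fun j => ?_) i
  · rw [src_symm_eq (w := .fstChain 0) (by rfl)]
    exact anyUpTo_zero s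
  · rw [src_symm_eq (w := .input j) (by rfl)]
    rfl

lemma flow_output_zero {s : Fin (m + 2) → Bool} (hs : ∃ i, s i = true) :
    flow s ((circuit m).tgt.symm (.inl 0)) = true := by
  rw [tgt_symm_eq (w := .fstChain (Fin.last _)) (by simp [tgtFun])]
  simpa [flow, anyUpTo, Fin.le_last] using hs

lemma flow_output_one {s : Fin (m + 2) → Bool} (hs : ∃ i, s i = false) :
    flow s ((circuit m).tgt.symm (.inl 1)) = false := by
  rw [tgt_symm_eq (w := .sndChain (Fin.last _)) (by simp [tgtFun])]
  by_contra h
  have hrest : ∀ j, rest s j = true := by simpa [flow, allUpTo, Fin.le_last] using h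
  simp only [rest, Bool.and_eq_true] at hrest
  obtain ⟨i, hi⟩ := hs
  have hall : s i = true := by
    refine Fin.cases ?_ (fun j => (hrest j).2) i
    simpa [anyUpTo_zero] using (hrest 0).1
  simp [hi] at hall

lemma rightIn_ofFlow (s : Fin (m + 2) → Bool) (i : Fin (m + 2)) :
    (circuit m).toNet.RightIn (Circuit.ofFlow (flow s)) i ↔ s i = true := by
  rw [Circuit.rightIn_iff (Circuit.isOrient_ofFlow _), Circuit.rightward_ofFlow, flow_src]

lemma circuit_P0 : (circuit m).toNet.P0 := fun s =>
  ⟨_, Circuit.valid_ofFlow (isFlow_flow s), rightIn_ofFlow s⟩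

lemma circuit_P2 : (circuit m).toNet.P2 := fun s ht hf =>
  ⟨_, Circuit.valid_ofFlow (isFlow_flow s), rightIn_ofFlow s, fun _ _ => by
    rw [Circuit.rightOut_iff, Circuit.rightOut_iff, Circuit.rightward_ofFlow,
      Circuit.rightward_ofFlow]
    exact ⟨flow_output_zero ht, by simpa using flow_output_one hf⟩⟩

end Extraction

/-- for every `k ≥ 2` there is a switching network `N_k` satisfying P0, P1
and P2, with at most `6k` non-leaf vertices. -/
theorem stmt_6 :
    ∀ k : ℕ, 2 ≤ k → ∃ N : SwitchNet k, N.P0 ∧ N.P1 ∧ N.P2 ∧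
      Nat.card {x : N.V // ¬ N.IsLeaf x} ≤ 6 * k := by
  intro k hk
  obtain ⟨m, rfl⟩ := Nat.exists_eq_add_of_le' hk
  refine ⟨(Extraction.circuit m).toNet, Extraction.circuit_P0, Circuit.toNet_P1 _,
    Extraction.circuit_P2, ?_⟩
  have hcard : Nat.card ((Extraction.circuit m).S × Bool) = (m + 1 + m) * 2 := by
    simp
  rw [Circuit.card_not_isLeaf, hcard]
  omega
end
end

section
/- Let G=(V,E) be a finite multigraph and C a family of pairwise disjoint subset conflicts, each of size at least 1. Construct G' and a family C' of exact conflict pairs as follows: independently for each conflict ({e_1,...,e_k}, v) in C, detach each edge e_i from the endpoint v and attach the freed end to a new vertex u_i; add new vertices u_0 and w and new edges u_0u_1, ..., u_0u_k, an edge from u_0 to v, and an edge u_0w; if k is odd, additionally subdivide the edge from u_0 to v by a new vertex v'; finally, letting f denote the edge incident to u_0 on the path from u_0 towards v, place the exact conflict pair ({f, u_0w}, u_0) into C'. Then G has an even orientation that violates no subset conflict of C if and only if G' has an even orientation that violates no exact conflict pair of C'. -/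
open scoped Classical

noncomputable section

section Construction

variable {V E ι : Type*}

/-- The size `k` of the `i`-th subset conflict. -/
def ksz8 (conf : ι → Set E × V) (i : ι) : ℕ := Nat.card {e : E // e ∈ (conf i).1}

/-- Vertices of `G'`: the original vertices; for each conflict `i` the vertices `u_e`
(one per conflict edge `e`, encoded as `some e`) and `u_0` (encoded as `none`);
the vertices `w`; and, for conflicts of odd size, the subdivision vertices `v'`. -/
def V8 (conf : ι → Set E × V) : Type _ :=
  V ⊕ (Σ i : ι, Option {e : E // e ∈ (conf i).1}) ⊕ ι ⊕ {i : ι // Odd (ksz8 conf i)}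

/-- Edges of `G'`: the original edges (reattached); the edges `u_0 u_e`; the edge `f` at
`u_0` towards `v` (going to `v'` if the size is odd, directly to `v` otherwise); the edges
`v' v` for odd size; and the edges `u_0 w`. -/
def E8 (conf : ι → Set E × V) : Type _ :=
  E ⊕ (Σ i : ι, {e : E // e ∈ (conf i).1}) ⊕ ι ⊕ {i : ι // Odd (ksz8 conf i)} ⊕ ι

/-- Reattachment of an endpoint `v` of an original edge `e`: if `e` belongs to a conflict
at `v`, the endpoint is detached from `v` and moved to the new vertex `u_e` of that
conflict; otherwise it stays at `v`. -/
def attach8 (conf : ι → Set E × V) (e : E) (v : V) : V8 conf :=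
  if h : ∃ i : ι, e ∈ (conf i).1 ∧ (conf i).2 = v then
    Sum.inr (Sum.inl ⟨h.choose, some ⟨e, h.choose_spec.1⟩⟩)
  else Sum.inl v

/-- The incidence map of `G'`. -/
def ends8 (ends : E → V × V) (conf : ι → Set E × V) :
    E8 conf → V8 conf × V8 conf
  | Sum.inl e => (attach8 conf e (ends e).1, attach8 conf e (ends e).2)
  | Sum.inr (Sum.inl q) =>
      (Sum.inr (Sum.inl ⟨q.1, none⟩), Sum.inr (Sum.inl ⟨q.1, some q.2⟩))
  | Sum.inr (Sum.inr (Sum.inl i)) =>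
      (Sum.inr (Sum.inl ⟨i, none⟩),
        if h : Odd (ksz8 conf i) then Sum.inr (Sum.inr (Sum.inr ⟨i, h⟩))
        else Sum.inl (conf i).2)
  | Sum.inr (Sum.inr (Sum.inr (Sum.inl q))) =>
      (Sum.inr (Sum.inr (Sum.inr q)), Sum.inl (conf q.1).2)
  | Sum.inr (Sum.inr (Sum.inr (Sum.inr i))) =>
      (Sum.inr (Sum.inl ⟨i, none⟩), Sum.inr (Sum.inr (Sum.inl i)))

/-- The family `C'` of exact conflict pairs of `G'`: for each conflict `i`, the pair
`({f, u_0 w}, u_0)`. -/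
def C8 (conf : ι → Set E × V) : Set (Set (E8 conf) × V8 conf) :=
  {c | ∃ i : ι,
    c = (({Sum.inr (Sum.inr (Sum.inl i)),
           Sum.inr (Sum.inr (Sum.inr (Sum.inr i)))} : Set (E8 conf)),
         Sum.inr (Sum.inl ⟨i, none⟩))}

end Construction

section Parity

variable {V E ι : Type*}

/-- Reducible version of `V8`. -/
abbrev Vertex8 (conf : ι → Set E × V) : Type _ :=
  V ⊕ (Σ i : ι, Option {e : E // e ∈ (conf i).1}) ⊕ ι ⊕ {i : ι // Odd (ksz8 conf i)}

/-- Reducible version of `E8`. -/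
abbrev Edge8 (conf : ι → Set E × V) : Type _ :=
  E ⊕ (Σ i : ι, {e : E // e ∈ (conf i).1}) ⊕ ι ⊕ {i : ι // Odd (ksz8 conf i)} ⊕ ι

/-- `attach8` with values in `Vertex8`. -/
def reattach (conf : ι → Set E × V) (e : E) (v : V) : Vertex8 conf :=
  attach8 conf e v

/-- `ends8` as a map from `Edge8` to pairs of elements of `Vertex8`. -/
def incidence8 (ends : E → V × V) (conf : ι → Set E × V) :
    Edge8 conf → Vertex8 conf × Vertex8 conf :=
  ends8 ends conf

theorem natCast_indeg [Fintype E] (o : E → V) (v : V) :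
    (indeg o v : ZMod 2) = ∑ e, if o e = v then 1 else 0 := by
  rw [indeg, Nat.card_eq_fintype_card, Fintype.card_subtype, Finset.sum_boole]

theorem even_indeg_iff [Fintype E] (o : E → V) (v : V) :
    Even (indeg o v) ↔ (∑ e, if o e = v then 1 else 0 : ZMod 2) = 0 := by
  rw [← natCast_indeg, ZMod.natCast_eq_zero_iff_even]

theorem sum_subtype_eq_sum_ite {α : Type*} [Fintype α] (p : α → Prop)
    [Fintype {x // p x}] (g : α → ZMod 2) :
    ∑ x : {x // p x}, g x = ∑ x, if p x then g x else 0 := by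
  rw [← Finset.sum_filter]
  exact (Finset.sum_subtype _ (by simp) g).symm

/-- Conflicts at a common vertex do not share edges. -/
def DisjointConflicts (conf : ι → Set E × V) : Prop :=
  ∀ i j, i ≠ j → (conf i).2 = (conf j).2 → Disjoint (conf i).1 (conf j).1

theorem DisjointConflicts.index_eq {conf : ι → Set E × V} (hdisj : DisjointConflicts conf)
    {i j : ι} {e : E} (hi : e ∈ (conf i).1) (hj : e ∈ (conf j).1)
    (hv : (conf i).2 = (conf j).2) : i = j := by
  by_contra hij
  exact Set.disjoint_left.1 (hdisj i j hij hv) hi hj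

theorem reattach_of_not_exists {conf : ι → Set E × V} {e : E} {v : V}
    (h : ¬ ∃ i, e ∈ (conf i).1 ∧ (conf i).2 = v) : reattach conf e v = Sum.inl v :=
  dif_neg h

theorem reattach_of_mem {conf : ι → Set E × V} (hdisj : DisjointConflicts conf)
    {i : ι} {e : E} (he : e ∈ (conf i).1) :
    reattach conf e (conf i).2 = Sum.inr (Sum.inl ⟨i, some ⟨e, he⟩⟩) := by
  have h : ∃ j, e ∈ (conf j).1 ∧ (conf j).2 = (conf i).2 := ⟨i, he, rfl⟩
  have key : ∀ j (hj : e ∈ (conf j).1), j = i →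
      (Sum.inr (Sum.inl ⟨j, some ⟨e, hj⟩⟩) : Vertex8 conf) =
        Sum.inr (Sum.inl ⟨i, some ⟨e, he⟩⟩) := by
    rintro j hj rfl
    rfl
  exact (dif_pos h).trans (key _ _ (hdisj.index_eq h.choose_spec.1 he h.choose_spec.2))

theorem reattach_eq_inl_iff {conf : ι → Set E × V} (hdisj : DisjointConflicts conf)
    (e : E) (v x : V) :
    reattach conf e v = Sum.inl x ↔ v = x ∧ ¬ ∃ i, e ∈ (conf i).1 ∧ (conf i).2 = v := by
  by_cases h : ∃ i, e ∈ (conf i).1 ∧ (conf i).2 = v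
  · obtain ⟨i, hi, rfl⟩ := h
    rw [reattach_of_mem hdisj hi]
    simp only [reduceCtorEq, false_iff, not_and, not_not]
    exact fun _ => ⟨i, hi, rfl⟩
  · simp [reattach_of_not_exists h, h]

theorem reattach_eq_some_iff {conf : ι → Set E × V} (hdisj : DisjointConflicts conf)
    (e : E) (v : V) (i : ι) (e' : {e : E // e ∈ (conf i).1}) :
    reattach conf e v = Sum.inr (Sum.inl ⟨i, some e'⟩) ↔ e = e' ∧ v = (conf i).2 := by
  constructor
  · intro h
    by_cases hc : ∃ j, e ∈ (conf j).1 ∧ (conf j).2 = v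
    · obtain ⟨j, hj, rfl⟩ := hc
      rw [reattach_of_mem hdisj hj] at h
      simp only [Sum.inr.injEq, Sum.inl.injEq, Sigma.mk.injEq] at h
      obtain ⟨rfl, h⟩ := h
      simp only [heq_eq_eq, Option.some.injEq] at h
      exact ⟨congrArg Subtype.val h, rfl⟩
    · rw [reattach_of_not_exists hc] at h
      cases h
  · rintro ⟨rfl, rfl⟩
    exact reattach_of_mem hdisj e'.2

theorem reattach_ne_none {conf : ι → Set E × V} (hdisj : DisjointConflicts conf)
    (e : E) (v : V) (i : ι) :
    reattach conf e v ≠ Sum.inr (Sum.inl ⟨i, none⟩) := by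
  by_cases h : ∃ i, e ∈ (conf i).1 ∧ (conf i).2 = v
  · obtain ⟨j, hj, rfl⟩ := h
    rw [reattach_of_mem hdisj hj]
    simp only [ne_eq, Sum.inr.injEq, Sum.inl.injEq, Sigma.mk.injEq, not_and]
    rintro rfl
    simp
  · simp [reattach_of_not_exists h]

theorem reattach_ne_inr_inr {conf : ι → Set E × V} (hdisj : DisjointConflicts conf)
    (e : E) (v : V) (x : ι ⊕ {i : ι // Odd (ksz8 conf i)}) :
    reattach conf e v ≠ Sum.inr (Sum.inr x) := by
  by_cases h : ∃ i, e ∈ (conf i).1 ∧ (conf i).2 = v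
  · obtain ⟨j, hj, rfl⟩ := h
    simp [reattach_of_mem hdisj hj]
  · simp [reattach_of_not_exists h]

/-- The head assignment of `G'` determined by a head assignment `o` of `G` and the sets of
new edges that point to their first listed endpoint: `a` among the edges `u_0 u_e`, `b` among
the edges `f`, `c` among the edges `v' v`, and `d` among the edges `u_0 w`. -/
def orient8 (conf : ι → Set E × V) (o : E → V) (a : (Σ i : ι, {e : E // e ∈ (conf i).1}) → Prop)
    (b : ι → Prop) (c : {i : ι // Odd (ksz8 conf i)} → Prop) (d : ι → Prop) :
    Edge8 conf → Vertex8 conf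
  | Sum.inl e => reattach conf e (o e)
  | Sum.inr (Sum.inl q) =>
      if a q then Sum.inr (Sum.inl ⟨q.1, none⟩) else Sum.inr (Sum.inl ⟨q.1, some q.2⟩)
  | Sum.inr (Sum.inr (Sum.inl i)) =>
      if b i then Sum.inr (Sum.inl ⟨i, none⟩)
      else if h : Odd (ksz8 conf i) then Sum.inr (Sum.inr (Sum.inr ⟨i, h⟩))
        else Sum.inl (conf i).2
  | Sum.inr (Sum.inr (Sum.inr (Sum.inl q))) =>
      if c q then Sum.inr (Sum.inr (Sum.inr q)) else Sum.inl (conf q.1).2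
  | Sum.inr (Sum.inr (Sum.inr (Sum.inr i))) =>
      if d i then Sum.inr (Sum.inl ⟨i, none⟩) else Sum.inr (Sum.inr (Sum.inl i))

variable {conf : ι → Set E × V} {o : E → V} {a : (Σ i : ι, {e : E // e ∈ (conf i).1}) → Prop}
  {b : ι → Prop} {c : {i : ι // Odd (ksz8 conf i)} → Prop} {d : ι → Prop}

theorem isOrient_orient8 {ends : E → V × V} (ho : IsOrient ends o) :
    IsOrient (incidence8 ends conf) (orient8 conf o a b c d) := by
  rintro (e | q | i | q | i)
  · rcases ho e with h | h
    · exact Or.inl (congrArg (reattach conf e) h)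
    · exact Or.inr (congrArg (reattach conf e) h)
  · exact (em (a q)).imp (fun h => if_pos h) (fun h => if_neg h)
  · exact (em (b i)).imp (fun h => if_pos h) (fun h => if_neg h)
  · exact (em (c q)).imp (fun h => if_pos h) (fun h => if_neg h)
  · exact (em (d i)).imp (fun h => if_pos h) (fun h => if_neg h)

theorem exists_eq_orient8 {ends : E → V × V} {o' : Edge8 conf → Vertex8 conf}
    (ho' : IsOrient (incidence8 ends conf) o') :
    ∃ o a b c d, IsOrient ends o ∧ o' = orient8 conf o a b c d := by
  have h : ∀ e, ∃ v, (v = (ends e).1 ∨ v = (ends e).2) ∧ o' (Sum.inl e) = reattach conf e v := by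
    intro e
    rcases ho' (Sum.inl e) with h | h
    · exact ⟨_, Or.inl rfl, h⟩
    · exact ⟨_, Or.inr rfl, h⟩
  choose o ho hoa using h
  refine ⟨o, fun q => o' (Sum.inr (Sum.inl q)) = Sum.inr (Sum.inl ⟨q.1, none⟩),
    fun i => o' (Sum.inr (Sum.inr (Sum.inl i))) = Sum.inr (Sum.inl ⟨i, none⟩),
    fun q => o' (Sum.inr (Sum.inr (Sum.inr (Sum.inl q)))) = Sum.inr (Sum.inr (Sum.inr q)),
    fun i => o' (Sum.inr (Sum.inr (Sum.inr (Sum.inr i)))) = Sum.inr (Sum.inl ⟨i, none⟩),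
    ho, ?_⟩
  funext x
  have hx := ho' x
  rcases x with e | q | i | q | i
  · exact hoa e
  all_goals
    simp only [orient8]
    split_ifs with h₁ <;> simp_all [incidence8, ends8]

theorem orient8_sigma_eq_none_iff (i j : ι) (e : {e : E // e ∈ (conf j).1}) :
    orient8 conf o a b c d (Sum.inr (Sum.inl ⟨j, e⟩)) = Sum.inr (Sum.inl ⟨i, none⟩) ↔
      j = i ∧ a ⟨j, e⟩ := by
  simp only [orient8]
  split_ifs with h
  · simp only [Sum.inr.injEq, Sum.inl.injEq, Sigma.mk.injEq, h, and_true]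
    exact ⟨And.left, by rintro rfl; simp⟩
  · simp only [Sum.inr.injEq, Sum.inl.injEq, Sigma.mk.injEq, h, and_false, iff_false, not_and]
    rintro rfl
    simp

theorem orient8_sigma_eq_some_iff (i j : ι) (e : {e : E // e ∈ (conf i).1})
    (e' : {e : E // e ∈ (conf j).1}) :
    orient8 conf o a b c d (Sum.inr (Sum.inl ⟨j, e'⟩)) = Sum.inr (Sum.inl ⟨i, some e⟩) ↔
      (j = i ∧ (e' : E) = e) ∧ ¬ a ⟨j, e'⟩ := by
  simp only [orient8]
  split_ifs with h
  · simp only [Sum.inr.injEq, Sum.inl.injEq, Sigma.mk.injEq, h, not_true, and_false, iff_false,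
      not_and]
    rintro rfl
    simp
  · simp only [Sum.inr.injEq, Sum.inl.injEq, Sigma.mk.injEq, h, not_false_iff, and_true]
    refine and_congr_right ?_
    rintro rfl
    simp [Subtype.ext_iff]

theorem orient8_f_eq_none_iff (i j : ι) :
    orient8 conf o a b c d (Sum.inr (Sum.inr (Sum.inl j))) = Sum.inr (Sum.inl ⟨i, none⟩) ↔
      j = i ∧ b j := by
  simp only [orient8]
  split_ifs with h h'
  · simp only [Sum.inr.injEq, Sum.inl.injEq, Sigma.mk.injEq, h, and_true]
    exact ⟨And.left, by rintro rfl; simp⟩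
  all_goals simp [h]

theorem orient8_f_ne_some (i j : ι) (e : {e : E // e ∈ (conf i).1}) :
    orient8 conf o a b c d (Sum.inr (Sum.inr (Sum.inl j))) ≠ Sum.inr (Sum.inl ⟨i, some e⟩) := by
  simp only [orient8]
  split_ifs with h h'
  · simp only [ne_eq, Sum.inr.injEq, Sum.inl.injEq, Sigma.mk.injEq, not_and]
    rintro rfl
    simp
  all_goals simp

theorem orient8_w_eq_none_iff (i j : ι) :
    orient8 conf o a b c d (Sum.inr (Sum.inr (Sum.inr (Sum.inr j)))) =
      Sum.inr (Sum.inl ⟨i, none⟩) ↔ j = i ∧ d j := by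
  simp only [orient8]
  split_ifs with h
  · simp only [Sum.inr.injEq, Sum.inl.injEq, Sigma.mk.injEq, h, and_true]
    exact ⟨And.left, by rintro rfl; simp⟩
  · simp [h]

theorem orient8_w_ne_some (i j : ι) (e : {e : E // e ∈ (conf i).1}) :
    orient8 conf o a b c d (Sum.inr (Sum.inr (Sum.inr (Sum.inr j)))) ≠
      Sum.inr (Sum.inl ⟨i, some e⟩) := by
  simp only [orient8]
  split_ifs with h
  · simp only [ne_eq, Sum.inr.injEq, Sum.inl.injEq, Sigma.mk.injEq, not_and]
    rintro rfl
    simp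
  · simp

theorem orient8_v'_ne_inr_inl (q : {i : ι // Odd (ksz8 conf i)})
    (x : Σ i : ι, Option {e : E // e ∈ (conf i).1}) :
    orient8 conf o a b c d (Sum.inr (Sum.inr (Sum.inr (Sum.inl q)))) ≠ Sum.inr (Sum.inl x) := by
  simp only [orient8]
  split_ifs <;> simp

variable [Fintype E]

/-- An even orientation of `G'` violates the `i`-th exact conflict pair iff the corresponding
orientation of `G` violates the `i`-th subset conflict. -/
theorem setOf_orient8_eq_pair_iff (hdisj : DisjointConflicts conf)
    (ha : ∀ i e, a ⟨i, e⟩ ↔ o e ≠ (conf i).2)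
    (hb : ∀ i, (∑ e, (if a ⟨i, e⟩ then 1 else 0) + ((if b i then 1 else 0) + 1) : ZMod 2) = 0)
    (hd : ∀ i, d i) (i : ι) :
    {x | orient8 conf o a b c d x = Sum.inr (Sum.inl ⟨i, none⟩)} =
        ({Sum.inr (Sum.inr (Sum.inl i)), Sum.inr (Sum.inr (Sum.inr (Sum.inr i)))} :
          Set (Edge8 conf)) ↔
      ∀ e ∈ (conf i).1, o e = (conf i).2 := by
  constructor
  · intro h e he
    by_contra hne
    have : (Sum.inr (Sum.inl ⟨i, ⟨e, he⟩⟩) : Edge8 conf) ∈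
        {x | orient8 conf o a b c d x = Sum.inr (Sum.inl ⟨i, none⟩)} :=
      (orient8_sigma_eq_none_iff _ _ _).2 ⟨rfl, (ha _ _).2 hne⟩
    rw [h] at this
    simp at this
  · intro h
    have hai : ∀ e, ¬ a ⟨i, e⟩ := fun e => by simp [ha, h e e.2]
    have hbi : b i := by
      by_contra hbi
      simpa [hai, hbi] using hb i
    ext (e | ⟨j, e⟩ | j | q | j)
    · simpa [orient8] using reattach_ne_none hdisj e (o e) i
    · simp only [Set.mem_ofPred_eq, orient8_sigma_eq_none_iff]
      simp only [Set.mem_insert_iff, Set.mem_singleton_iff, reduceCtorEq, Sum.inr.injEq, or_self,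
        iff_false, not_and]
      rintro rfl
      exact hai e
    · simp only [Set.mem_ofPred_eq, orient8_f_eq_none_iff]
      simp only [Set.mem_insert_iff, Set.mem_singleton_iff, reduceCtorEq, Sum.inr.injEq,
        Sum.inl.injEq, or_false, and_iff_left_iff_imp]
      rintro rfl
      exact hbi
    · simp only [Set.mem_ofPred_eq, orient8_v'_ne_inr_inl]
      simp
    · simp [orient8_w_eq_none_iff, hd]

variable [Fintype ι]

theorem sum_e8 (g : Edge8 conf → ZMod 2) :
    ∑ x, g x = ∑ e, g (Sum.inl e) + (∑ i, ∑ e, g (Sum.inr (Sum.inl ⟨i, e⟩)) +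
      (∑ i, g (Sum.inr (Sum.inr (Sum.inl i))) +
      (∑ q, g (Sum.inr (Sum.inr (Sum.inr (Sum.inl q)))) +
      ∑ i, g (Sum.inr (Sum.inr (Sum.inr (Sum.inr i))))))) := by
  simp only [Fintype.sum_sum_type, Fintype.sum_sigma]

theorem even_indeg_orient8_w (hdisj : DisjointConflicts conf) (i : ι) :
    Even (indeg (orient8 conf o a b c d) (Sum.inr (Sum.inr (Sum.inl i)))) ↔ d i := by
  have hf : ∀ j, orient8 conf o a b c d (Sum.inr (Sum.inr (Sum.inl j))) ≠
      Sum.inr (Sum.inr (Sum.inl i)) := by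
    intro j
    simp only [orient8]
    split_ifs <;> simp
  have hw : ∀ j, orient8 conf o a b c d (Sum.inr (Sum.inr (Sum.inr (Sum.inr j)))) =
      Sum.inr (Sum.inr (Sum.inl i)) ↔ j = i ∧ ¬ d j := by
    intro j
    simp only [orient8]
    split_ifs with h <;> simp [h]
  rw [even_indeg_iff, sum_e8]
  simp only [hf, hw, ite_and, Finset.sum_ite_eq', Finset.mem_univ, if_true]
  simp [orient8, reattach_ne_inr_inr hdisj, ite_eq_iff]

theorem even_indeg_orient8_v' (hdisj : DisjointConflicts conf)
    (q : {i : ι // Odd (ksz8 conf i)}) :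
    Even (indeg (orient8 conf o a b c d) (Sum.inr (Sum.inr (Sum.inr q)))) ↔ (c q ↔ ¬ b q) := by
  have hf : ∀ j, orient8 conf o a b c d (Sum.inr (Sum.inr (Sum.inl j))) =
      Sum.inr (Sum.inr (Sum.inr q)) ↔ j = q ∧ ¬ b j := by
    intro j
    simp only [orient8]
    split_ifs with h h'
    · simp [h]
    · simp [h, Subtype.ext_iff]
    · simp only [h, not_false_iff, and_true, false_iff]
      rintro rfl
      exact h' q.2
  have hv : ∀ r, orient8 conf o a b c d (Sum.inr (Sum.inr (Sum.inr (Sum.inl r)))) =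
      Sum.inr (Sum.inr (Sum.inr q)) ↔ r = q ∧ c r := by
    intro r
    simp only [orient8]
    split_ifs with h <;> simp [h]
  rw [even_indeg_iff, sum_e8]
  simp only [hf, hv, ite_and, Finset.sum_ite_eq', Finset.mem_univ, if_true]
  by_cases hb : b q <;> by_cases hc : c q <;>
    simp [orient8, reattach_ne_inr_inr hdisj, ite_eq_iff, hb, hc, CharTwo.add_self_eq_zero]

theorem even_indeg_orient8_some (hdisj : DisjointConflicts conf) (i : ι)
    (e : {e : E // e ∈ (conf i).1}) :
    Even (indeg (orient8 conf o a b c d) (Sum.inr (Sum.inl ⟨i, some e⟩))) ↔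
      (a ⟨i, e⟩ ↔ o e ≠ (conf i).2) := by
  have hG : ∀ e', orient8 conf o a b c d (Sum.inl e') = Sum.inr (Sum.inl ⟨i, some e⟩) ↔
      e' = e ∧ o e' = (conf i).2 := fun e' => reattach_eq_some_iff hdisj _ _ _ _
  have hu : ∑ j, ∑ e' : {e : E // e ∈ (conf j).1},
      (if (j = i ∧ (e' : E) = e) ∧ ¬ a ⟨j, e'⟩ then 1 else 0 : ZMod 2) =
        if a ⟨i, e⟩ then 0 else 1 := by
    rw [Finset.sum_eq_single i, Finset.sum_eq_single e]
    · simp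
    · intro e' _ h
      simp [← Subtype.ext_iff, h]
    · simp
    · intro j _ h
      simp [h]
    · simp
  rw [even_indeg_iff, sum_e8]
  simp only [hG, orient8_sigma_eq_some_iff, hu, orient8_f_ne_some, orient8_v'_ne_inr_inl,
    orient8_w_ne_some]
  simp only [ite_and, Finset.sum_ite_eq', Finset.mem_univ, if_true]
  by_cases ha : a ⟨i, e⟩ <;> by_cases ho : o e = (conf i).2 <;>
    simp [ha, ho, CharTwo.add_self_eq_zero]

theorem even_indeg_orient8_none (hdisj : DisjointConflicts conf) (i : ι) :
    Even (indeg (orient8 conf o a b c d) (Sum.inr (Sum.inl ⟨i, none⟩))) ↔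
      (∑ e, (if a ⟨i, e⟩ then 1 else 0) + ((if b i then 1 else 0) + (if d i then 1 else 0)) :
        ZMod 2) = 0 := by
  have hG : ∀ e, orient8 conf o a b c d (Sum.inl e) ≠ Sum.inr (Sum.inl ⟨i, none⟩) :=
    fun e => reattach_ne_none hdisj _ _ _
  have hu : ∑ j, ∑ e : {e : E // e ∈ (conf j).1},
      (if j = i ∧ a ⟨j, e⟩ then 1 else 0 : ZMod 2) = ∑ e, if a ⟨i, e⟩ then 1 else 0 := by
    rw [Finset.sum_eq_single i]
    · simp
    · intro j _ h
      simp [h]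
    · simp
  rw [even_indeg_iff, sum_e8]
  simp only [hG, orient8_sigma_eq_none_iff, hu, orient8_f_eq_none_iff, orient8_v'_ne_inr_inl,
    orient8_w_eq_none_iff]
  simp [ite_and]

theorem sum_eq_sum_reattach_add (hdisj : DisjointConflicts conf) (v : V) :
    (∑ e, if o e = v then 1 else 0 : ZMod 2) =
      (∑ e, if reattach conf e (o e) = Sum.inl v then 1 else 0) +
        ∑ i, if (conf i).2 = v then
          ∑ e : {e : E // e ∈ (conf i).1}, (if o e = (conf i).2 then 1 else 0) else 0 := by
  have hsub : ∀ i, (if (conf i).2 = v then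
      ∑ e : {e : E // e ∈ (conf i).1}, (if o e = (conf i).2 then 1 else 0) else 0 : ZMod 2) =
        ∑ e, if e ∈ (conf i).1 ∧ (conf i).2 = v ∧ o e = v then 1 else 0 := by
    intro i
    split_ifs with h
    · rw [sum_subtype_eq_sum_ite (· ∈ (conf i).1) fun e => if o e = (conf i).2 then 1 else 0]
      simp [h, ite_and]
    · simp [h]
  simp only [hsub]
  rw [Finset.sum_comm, ← Finset.sum_add_distrib]
  refine Finset.sum_congr rfl fun e _ => ?_
  simp only [reattach_eq_inl_iff hdisj]
  by_cases ho : o e = v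
  · subst ho
    by_cases hc : ∃ i, e ∈ (conf i).1 ∧ (conf i).2 = o e
    · obtain ⟨i, hi, hv⟩ := hc
      rw [Finset.sum_eq_single i]
      · rw [if_pos rfl, if_neg fun h => h.2 ⟨i, hi, hv⟩, if_pos ⟨hi, hv, rfl⟩, zero_add]
      · intro j _ hj
        rw [if_neg]
        rintro ⟨hj', hv', -⟩
        exact hj (hdisj.index_eq hj' hi (hv'.trans hv.symm))
      · simp
    · rw [if_pos rfl, if_pos ⟨rfl, hc⟩, Finset.sum_eq_zero, add_zero]
      exact fun i _ => if_neg fun h => hc ⟨i, h.1, h.2.1⟩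
  · simp [ho]

theorem even_indeg_orient8_inl (hdisj : DisjointConflicts conf)
    (ha : ∀ i e, a ⟨i, e⟩ ↔ o e ≠ (conf i).2)
    (hb : ∀ i, (∑ e, (if a ⟨i, e⟩ then 1 else 0) + ((if b i then 1 else 0) + 1) : ZMod 2) = 0)
    (hc : ∀ q, c q ↔ ¬ b q) (v : V) :
    Even (indeg (orient8 conf o a b c d) (Sum.inl v)) ↔ Even (indeg o v) := by
  have hw : ∀ i, orient8 conf o a b c d (Sum.inr (Sum.inr (Sum.inr (Sum.inr i)))) ≠
      Sum.inl v := by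
    intro i
    simp only [orient8]
    split_ifs <;> simp
  have hu : ∀ q, orient8 conf o a b c d (Sum.inr (Sum.inl q)) ≠ Sum.inl v := by
    intro q
    simp only [orient8]
    split_ifs <;> simp
  have hf : ∀ i, orient8 conf o a b c d (Sum.inr (Sum.inr (Sum.inl i))) = Sum.inl v ↔
      (conf i).2 = v ∧ ¬ Odd (ksz8 conf i) ∧ ¬ b i := by
    intro i
    simp only [orient8]
    split_ifs with h h' <;> simp [*]
  have hv : ∀ q, orient8 conf o a b c d (Sum.inr (Sum.inr (Sum.inr (Sum.inl q)))) =
      Sum.inl v ↔ (conf q).2 = v ∧ b q := by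
    intro q
    simp only [orient8, hc]
    split_ifs with h <;> simp_all
  have hG : ∀ e, orient8 conf o a b c d (Sum.inl e) = reattach conf e (o e) := fun _ => rfl
  have hodd : ∑ q : {i : ι // Odd (ksz8 conf i)},
      (if (conf q).2 = v ∧ b q then 1 else 0 : ZMod 2) =
        ∑ i, if (conf i).2 = v ∧ Odd (ksz8 conf i) ∧ b i then 1 else 0 := by
    rw [sum_subtype_eq_sum_ite (fun i => Odd (ksz8 conf i))
      fun i => if (conf i).2 = v ∧ b i then 1 else 0]
    refine Finset.sum_congr rfl fun i _ => ?_
    by_cases h : Odd (ksz8 conf i) <;> simp [h]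
  have hcount : ∀ i, (∑ e : {e : E // e ∈ (conf i).1}, (if o e = (conf i).2 then 1 else 0) :
      ZMod 2) = ksz8 conf i + 1 + if b i then 1 else 0 := by
    intro i
    have hk : (∑ e : {e : E // e ∈ (conf i).1}, (if o e = (conf i).2 then 1 else 0) +
        ∑ e, (if a ⟨i, e⟩ then 1 else 0) : ZMod 2) = ksz8 conf i := by
      rw [← Finset.sum_add_distrib, ksz8, Nat.card_eq_fintype_card, ← Finset.card_univ,
        Finset.cast_card]
      refine Finset.sum_congr rfl fun e _ => ?_
      by_cases h : o e = (conf i).2 <;> simp [ha, h]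
    rw [← hk]
    linear_combination -hb i
  rw [even_indeg_iff, even_indeg_iff, sum_e8, sum_eq_sum_reattach_add hdisj v]
  simp only [hG, hu, hf, hv, hw, hodd, if_false, Finset.sum_const_zero, zero_add, add_zero]
  rw [← Finset.sum_add_distrib]
  refine Eq.congr_left (congrArg _ (Finset.sum_congr rfl fun i _ => ?_))
  rw [hcount]
  by_cases hvi : (conf i).2 = v
  · rcases Nat.even_or_odd (ksz8 conf i) with hk | hk
    · have : (ksz8 conf i : ZMod 2) = 0 := (ZMod.natCast_eq_zero_iff_even).2 hk
      by_cases hbi : b i <;> simp [*, CharTwo.add_self_eq_zero]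
    · have : (ksz8 conf i : ZMod 2) = 1 := (ZMod.natCast_eq_one_iff_odd).2 hk
      by_cases hbi : b i <;> simp [*, CharTwo.add_self_eq_zero]
  · simp [hvi]

/-- Evenness of the orientation of `G'` determines the orientations of the new edges and is
otherwise equivalent to evenness of the orientation of `G`. -/
theorem forall_even_indeg_orient8_iff (hdisj : DisjointConflicts conf) :
    (∀ x, Even (indeg (orient8 conf o a b c d) x)) ↔
      (∀ i, d i) ∧ (∀ q, c q ↔ ¬ b q) ∧ (∀ i e, a ⟨i, e⟩ ↔ o e ≠ (conf i).2) ∧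
      (∀ i, (∑ e, (if a ⟨i, e⟩ then 1 else 0) + ((if b i then 1 else 0) + 1) : ZMod 2) = 0) ∧
      ∀ v, Even (indeg o v) := by
  simp only [Sum.forall, Sigma.forall, Option.forall, even_indeg_orient8_w hdisj,
    even_indeg_orient8_v' hdisj, even_indeg_orient8_some hdisj, even_indeg_orient8_none hdisj]
  constructor
  · rintro ⟨hv, hu, hd, hc⟩
    have hb := fun i => (hu i).1
    simp only [hd, if_true] at hb
    have ha := fun i => (hu i).2
    exact ⟨hd, hc, ha, hb, fun v => (even_indeg_orient8_inl hdisj ha hb hc v).1 (hv v)⟩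
  · rintro ⟨hd, hc, ha, hb, hv⟩
    refine ⟨fun v => (even_indeg_orient8_inl hdisj ha hb hc v).2 (hv v),
      fun i => ⟨?_, ha i⟩, hd, hc⟩
    simpa [hd] using hb i

end Parity

/-- for pairwise disjoint subset conflicts (each of size at least one),
`G` has an even orientation violating no subset conflict of `C` iff the modified graph
`G'` has an even orientation violating no exact conflict pair of `C'`. -/
theorem stmt_8 {V E ι : Type*} [Finite V] [Finite E] [Finite ι]
    (ends : E → V × V) (hloop : ∀ e, (ends e).1 ≠ (ends e).2)
    (conf : ι → Set E × V)
    (hsize : ∀ i, 1 ≤ ksz8 conf i)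
    (hinc : ∀ i, ∀ e ∈ (conf i).1, Inc ends e (conf i).2)
    (hdisj : ∀ i j, i ≠ j → (conf i).2 = (conf j).2 → Disjoint (conf i).1 (conf j).1) :
    (∃ o : E → V, IsOrient ends o ∧ (∀ v, Even (indeg o v)) ∧
        ∀ i : ι, ¬ ∀ e ∈ (conf i).1, o e = (conf i).2) ↔
    (∃ o' : E8 conf → V8 conf, IsOrient (ends8 ends conf) o' ∧
        (∀ x, Even (indeg o' x)) ∧
        ∀ c ∈ C8 conf, {e | o' e = c.2} ≠ c.1) := by
  have := Fintype.ofFinite E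
  have := Fintype.ofFinite ι
  have hdisj' : DisjointConflicts conf := hdisj
  constructor
  · rintro ⟨o, ho, heven, hviol⟩
    obtain ⟨a, ha⟩ : ∃ a : (Σ i : ι, {e : E // e ∈ (conf i).1}) → Prop,
        ∀ i e, a ⟨i, e⟩ ↔ o e ≠ (conf i).2 :=
      ⟨fun q => o q.2 ≠ (conf q.1).2, fun _ _ => Iff.rfl⟩
    obtain ⟨b, hb'⟩ : ∃ b : ι → Prop,
        ∀ i, b i ↔ (∑ e, (if a ⟨i, e⟩ then 1 else 0) : ZMod 2) = 0 := ⟨_, fun _ => Iff.rfl⟩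
    have hb : ∀ i, (∑ e, (if a ⟨i, e⟩ then 1 else 0) + ((if b i then 1 else 0) + 1) : ZMod 2) =
        0 := by
      intro i
      by_cases h : b i
      · rw [if_pos h, CharTwo.add_self_eq_zero, add_zero]
        exact (hb' i).1 h
      · rw [if_neg h, zero_add, Fin.eq_one_of_ne_zero _ (mt (hb' i).2 h)]
        rfl
    refine ⟨orient8 conf o a b (fun q => ¬ b q) fun _ => True, isOrient_orient8 ho,
      (forall_even_indeg_orient8_iff hdisj').2 ⟨fun _ => trivial, fun _ => Iff.rfl, ha, hb, heven⟩,
      ?_⟩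
    rintro _ ⟨i, rfl⟩ h
    exact hviol i ((setOf_orient8_eq_pair_iff hdisj' ha hb (fun _ => trivial) i).1 h)
  · rintro ⟨o', ho', heven, hviol⟩
    obtain ⟨o, a, b, c, d, ho, rfl⟩ := exists_eq_orient8 ho'
    obtain ⟨hd, hc, ha, hb, hv⟩ := (forall_even_indeg_orient8_iff hdisj').1 heven
    exact ⟨o, ho, hv, fun i h => hviol _ ⟨i, rfl⟩
      ((setOf_orient8_eq_pair_iff hdisj' ha hb hd i).2 h)⟩
end
end
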